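/- arXiv:math/0403129 — 5 statements merged into one kernel-verified Lean document; each statement's English description precedes it below -/
import Mathlib

section
/- Let G be a group with a finite generating set S, and let H ≥ J be finite index normal subgroups of G. Let Σ be a generating set for H arising from S by the Reidemeister–Schreier process (i.e. the Schreier generating set of H associated to a Schreier transversal of H in G; in particular |Σ| ≤ |S|[G : H]). Then w(X(G/J; S)) ≤ w(X(H/J; Σ)) + 2|S|[G : H]. -/
/-- A (multi)graph: a type of vertices, a type of edges, and an endpoint map
(an edge with endpoints `(a, b)` joins `a` to `b`; edges are counted with
multiplicity). -/
structure MultiGraph where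
  V : Type*
  E : Type*
  ends : E → V × V

/-- `|∂A|`: the number of edges with exactly one endpoint in `A`. -/
noncomputable def MultiGraph.bdry (X : MultiGraph) (A : Set X.V) : ℕ :=
  Nat.card {e : X.E // Xor' ((X.ends e).1 ∈ A) ((X.ends e).2 ∈ A)}

/-- The width `w(X)` of a finite graph `X`: the minimum, over all linear orderings of
the vertices (bijections `Fin |V(X)| ≃ V(X)`), of the maximal value of `|∂D_n|`, where
`D_n` is the set of the first `n` vertices. -/
noncomputable def MultiGraph.width (X : MultiGraph) : ℕ :=
  sInf {w | ∃ e : Fin (Nat.card X.V) ≃ X.V,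
    ∀ n : ℕ, X.bdry (⇑e '' {m | (m : ℕ) < n}) ≤ w}

/-- The Cayley graph `X(G/N; S)` of the quotient of `G` by a normal subgroup `N`, with
respect to a finite generating set `S` of `G`: the vertex set is the quotient group
`G/N`, and for each vertex `v` and each `s ∈ S` there is one edge joining `v` to `v·s`
(edges counted with multiplicity, one for each pair `(v, s)`). -/
noncomputable def cayleyQuot (G : Type*) [Group G] (S : Finset G) (N : Subgroup G)
    (hN : N.Normal) : MultiGraph :=
  letI := hN
  { V := G ⧸ N
    E := (G ⧸ N) × {s // s ∈ S}
    ends := fun p => (p.1, p.1 * (QuotientGroup.mk (p.2 : G) : G ⧸ N)) }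

/-! Every `q` in `G/J` is uniquely a product of an element of `H/J` and a representative. Forgetting
the representative maps `X(G/J; S)` to `X(H/J; Σ)`: the edge from `h t` to `h t s` lies over the
edge of `X(H/J; Σ)` leaving `h` along the generator of `(t, s)`, and no two edges lie over the same
one. Pull an optimal ordering of `H/J` back to `G/J`, breaking ties arbitrarily. An initial segment
of the pulled-back ordering differs from the preimage of an initial segment of `H/J` only inside a
single fibre. A fibre has `[G : H]` vertices, each with `2|S|` incident edges, and this bounds the
excess of the boundary. -/

open scoped symmDiff

theorem exists_equiv_fin_monotone {V α : Type*} [Finite V] [LinearOrder α] (f : V → α) :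
    ∃ o : Fin (Nat.card V) ≃ V, Monotone (f ∘ o) :=
  let e := (Finite.equivFin V).symm
  ⟨(Tuple.sort (f ∘ e)).trans e, Tuple.monotone_sort (f ∘ e)⟩

theorem symmDiff_image_Iio_subset_of_monotone {ι V α : Type*} [LinearOrder ι] [LinearOrder α]
    {f : V → α} {o : ι ≃ V} (hf : Monotone (f ∘ o)) (n : ι) :
    (o '' Set.Iio n) ∆ (f ⁻¹' Set.Iio (f (o n))) ⊆ f ⁻¹' {f (o n)} := by
  intro x hx
  obtain ⟨i, rfl⟩ := o.surjective x
  simp only [Set.mem_symmDiff, o.injective.mem_set_image, Set.mem_Iio, Set.mem_preimage,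
    not_lt] at hx
  rcases hx with ⟨hin, hni⟩ | ⟨hlt, hni⟩
  · exact (hf hin.le).antisymm hni
  · exact absurd (hf hni) hlt.not_ge

namespace MultiGraph

/-- The edge boundary `∂A`, whose cardinality is `bdry A`. -/
def boundary (X : MultiGraph) (A : Set X.V) : Set X.E :=
  {e | Xor ((X.ends e).1 ∈ A) ((X.ends e).2 ∈ A)}

/-- The edges with at least one endpoint in `A`; they bound the change of the edge boundary when a
vertex set is modified inside `A`. -/
def incident (X : MultiGraph) (A : Set X.V) : Set X.E :=
  {e | (X.ends e).1 ∈ A ∨ (X.ends e).2 ∈ A}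

theorem bdry_eq_ncard_boundary (X : MultiGraph) (A : Set X.V) : X.bdry A = (X.boundary A).ncard :=
  rfl

theorem bdry_univ (X : MultiGraph) : X.bdry Set.univ = 0 := by
  simp [bdry_eq_ncard_boundary, boundary]

theorem incident_mono (X : MultiGraph) {A B : Set X.V} (h : A ⊆ B) :
    X.incident A ⊆ X.incident B :=
  fun _ => Or.imp (@h _) (@h _)

theorem boundary_subset_union_incident_symmDiff (X : MultiGraph) (A B : Set X.V) :
    X.boundary A ⊆ X.boundary B ∪ X.incident (A ∆ B) := by
  intro e
  simp only [boundary, incident, Set.mem_union, Set.mem_ofPred_eq, Set.mem_symmDiff, Xor]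
  tauto

theorem bdry_le_bdry_add_ncard_incident (X : MultiGraph) [Finite X.E] {A B C : Set X.V}
    (h : A ∆ B ⊆ C) : X.bdry A ≤ X.bdry B + (X.incident C).ncard :=
  calc (X.boundary A).ncard ≤ (X.boundary B ∪ X.incident C).ncard :=
        Set.ncard_le_ncard <| (X.boundary_subset_union_incident_symmDiff A B).trans <|
          Set.union_subset_union_right _ (X.incident_mono h)
    _ ≤ X.bdry B + (X.incident C).ncard := Set.ncard_union_le _ _

theorem bdry_preimage_le {X Y : MultiGraph} [Finite Y.E] {π : X.V → Y.V} {ψ : X.E → Y.E}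
    (hψ : Function.Injective ψ) (hends : ∀ e, Y.ends (ψ e) = Prod.map π π (X.ends e))
    (B : Set Y.V) : X.bdry (π ⁻¹' B) ≤ Y.bdry B := by
  refine Set.ncard_le_ncard_of_injOn (t := Y.boundary B) ψ (fun e he => ?_) hψ.injOn
  change Xor ((Y.ends (ψ e)).1 ∈ B) ((Y.ends (ψ e)).2 ∈ B)
  rw [hends]
  exact he

theorem exists_ordering_bdry_le_width (X : MultiGraph) [Finite X.V] [Finite X.E] :
    ∃ o : Fin (Nat.card X.V) ≃ X.V, ∀ n, X.bdry (o '' Set.Iio n) ≤ X.width := by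
  obtain ⟨o, ho⟩ := Nat.sInf_mem (s := {w | ∃ e : Fin (Nat.card X.V) ≃ X.V,
    ∀ n : ℕ, X.bdry (⇑e '' {m | (m : ℕ) < n}) ≤ w})
    ⟨Nat.card X.E, (Finite.equivFin X.V).symm,
      fun _ => Nat.card_le_card_of_injective _ Subtype.val_injective⟩
  exact ⟨o, fun n => ho n⟩

theorem width_le_of_bdry_image_Iio_le (X : MultiGraph) (o : Fin (Nat.card X.V) ≃ X.V) {w : ℕ}
    (ho : ∀ n, X.bdry (o '' Set.Iio n) ≤ w) : X.width ≤ w := by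
  refine Nat.sInf_le ⟨o, fun n => ?_⟩
  by_cases hn : n < Nat.card X.V
  · exact ho ⟨n, hn⟩
  · have huniv : {m : Fin (Nat.card X.V) | (m : ℕ) < n} = Set.univ :=
      Set.eq_univ_of_forall fun m => m.isLt.trans_le (not_lt.mp hn)
    rw [huniv, Set.image_univ, o.range_eq_univ, bdry_univ]
    exact w.zero_le

theorem width_le_width_add_of_injective {X Y : MultiGraph} [Finite X.V] [Finite Y.V]
    [Finite Y.E] {π : X.V → Y.V} {ψ : X.E → Y.E} (hψ : Function.Injective ψ)
    (hends : ∀ e, Y.ends (ψ e) = Prod.map π π (X.ends e)) {c : ℕ}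
    (hc : ∀ y, (X.incident (π ⁻¹' {y})).ncard ≤ c) : X.width ≤ Y.width + c := by
  have : Finite X.E := Finite.of_injective ψ hψ
  obtain ⟨o, ho⟩ := Y.exists_ordering_bdry_le_width
  obtain ⟨p, hp⟩ := exists_equiv_fin_monotone (o.symm ∘ π)
  refine X.width_le_of_bdry_image_Iio_le p fun n => ?_
  set y := π (p n)
  have hdiff : (p '' Set.Iio n) ∆ (π ⁻¹' (o '' Set.Iio (o.symm y))) ⊆ π ⁻¹' {y} := by
    rw [o.image_eq_preimage_symm]
    exact (symmDiff_image_Iio_subset_of_monotone hp n).trans fun _ hx => o.symm.injective hx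
  calc X.bdry (p '' Set.Iio n)
      ≤ X.bdry (π ⁻¹' (o '' Set.Iio (o.symm y))) + (X.incident (π ⁻¹' {y})).ncard :=
        X.bdry_le_bdry_add_ncard_incident hdiff
    _ ≤ Y.bdry (o '' Set.Iio (o.symm y)) + c :=
        add_le_add (bdry_preimage_le hψ hends _) (hc y)
    _ ≤ Y.width + c := Nat.add_le_add_right (ho _) c

end MultiGraph

theorem ncard_incident_cayleyQuot_le {G : Type*} [Group G] (S : Finset G) {N : Subgroup G}
    (hN : N.Normal) (A : Set (G ⧸ N)) :
    ((cayleyQuot G S N hN).incident A).ncard ≤ 2 * S.card * A.ncard := by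
  let shift : (G ⧸ N) × S ≃ (G ⧸ N) × S :=
    Equiv.prodCongrLeft fun s => Equiv.mulRight ((s : G) : G ⧸ N)
  have hcard : (A ×ˢ (Set.univ : Set S)).ncard = S.card * A.ncard := by
    rw [Set.ncard_prod, Set.ncard_univ, Nat.card_eq_finsetCard, mul_comm]
  have hshift : (shift ⁻¹' (A ×ˢ Set.univ)).ncard = S.card * A.ncard := by
    rw [← hcard]
    exact Set.ncard_preimage_of_injective_subset_range shift.injective
      (shift.range_eq_univ ▸ Set.subset_univ _)
  calc ((cayleyQuot G S N hN).incident A).ncard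
      = (A ×ˢ Set.univ ∪ shift ⁻¹' (A ×ˢ Set.univ)).ncard := by
        congr 1
        exact Set.ext fun _ =>
          or_congr (and_iff_left trivial).symm (and_iff_left trivial).symm
    _ ≤ S.card * A.ncard + S.card * A.ncard :=
        (Set.ncard_union_le _ _).trans (by rw [hcard, hshift])
    _ = 2 * S.card * A.ncard := by ring

/-- `R` selects a representative in every right coset `H g`; the transversal is `Set.range R`. -/
structure IsRepresentativeMap {G : Type*} [Group G] (H : Subgroup G) (R : G → G) : Prop where
  mul_inv_mem (g : G) : g * (R g)⁻¹ ∈ H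
  apply_eq_of_mul_inv_mem (g g' : G) : g' * g⁻¹ ∈ H → R g' = R g

namespace IsRepresentativeMap

variable {G : Type*} [Group G] {H : Subgroup G} {R : G → G}

theorem apply_apply_mul (hR : IsRepresentativeMap H R) (g s : G) : R (R g * s) = R (g * s) :=
  (hR.apply_eq_of_mul_inv_mem _ _ (by simpa [mul_assoc] using hR.mul_inv_mem g)).symm

theorem isComplement_range (hR : IsRepresentativeMap H R) :
    Subgroup.IsComplement (H : Set G) (Set.range R) := by
  refine Subgroup.isComplement_iff_existsUnique_mul_inv_mem.mpr fun g =>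
    ⟨⟨R g, g, rfl⟩, hR.mul_inv_mem g, ?_⟩
  rintro ⟨_, a, rfl⟩ ha
  refine Subtype.ext ?_
  calc R a = R (R a) := by simpa using (hR.apply_apply_mul a 1).symm
    _ = R g := (hR.apply_eq_of_mul_inv_mem _ _ ha).symm

/-- The Cayley graph `X(H/J; Σ)`, where `H/J` is the image of `H` in `G/J` and `Σ` is the family of
Schreier generators `t s (R (t s))⁻¹` indexed by `t` in the transversal and `s` in `S`. -/
def schreierCayley (hR : IsRepresentativeMap H R) (S : Finset G) (J : Subgroup G) [J.Normal] :
    MultiGraph where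
  V := H.map (QuotientGroup.mk' J)
  E := H.map (QuotientGroup.mk' J) × (Set.range R × {s // s ∈ S})
  ends p := (p.1, p.1 *
    ⟨QuotientGroup.mk ((p.2.1 : G) * (p.2.2 : G) * (R ((p.2.1 : G) * (p.2.2 : G)))⁻¹),
      Subgroup.mem_map.mpr ⟨_, hR.mul_inv_mem _, rfl⟩⟩)

variable {J : Subgroup G} [hJn : J.Normal]

/-- The representative of a coset of `J`, well defined because `H` contains `J`: the factor `t` in
the decomposition `q = h t` of `q` in `G/J`. -/
def quotientRep (hR : IsRepresentativeMap H R) (hJH : J ≤ H) : G ⧸ J → Set.range R :=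
  Quotient.lift (Set.rangeFactorization R) fun a b hab =>
    Subtype.ext <| (hR.apply_eq_of_mul_inv_mem a b <| hJH <|
      hJn.mem_comm <| QuotientGroup.leftRel_apply.mp hab).symm

/-- The factor `h` in the decomposition `q = h t` of `q` in `G/J`, with `h` in `H/J` and `t` the
representative of `q`. -/
def quotientCoeff (hR : IsRepresentativeMap H R) (hJH : J ≤ H) (q : G ⧸ J) :
    H.map (QuotientGroup.mk' J) :=
  ⟨q * (QuotientGroup.mk (hR.quotientRep hJH q : G))⁻¹, by
    induction q using QuotientGroup.induction_on with
    | H g => exact ⟨g * (R g)⁻¹, hR.mul_inv_mem g, rfl⟩⟩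

theorem quotientCoeff_mul_quotientRep (hR : IsRepresentativeMap H R) (hJH : J ≤ H) (q : G ⧸ J) :
    (hR.quotientCoeff hJH q : G ⧸ J) * QuotientGroup.mk (hR.quotientRep hJH q : G) = q :=
  inv_mul_cancel_right _ _

theorem quotientCoeff_prodMk_quotientRep_injective (hR : IsRepresentativeMap H R) (hJH : J ≤ H) :
    Function.Injective fun q => (hR.quotientCoeff hJH q, hR.quotientRep hJH q) := by
  intro q q' h
  obtain ⟨hcoeff, hrep⟩ := Prod.mk.inj h
  rw [← hR.quotientCoeff_mul_quotientRep hJH q, hcoeff, hrep, quotientCoeff_mul_quotientRep]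

theorem ncard_quotientCoeff_fiber_le [H.FiniteIndex] (hR : IsRepresentativeMap H R) (hJH : J ≤ H)
    (v : H.map (QuotientGroup.mk' J)) : (hR.quotientCoeff hJH ⁻¹' {v}).ncard ≤ H.index := by
  have : Finite (Set.range R) := hR.isComplement_range.finite_right
  rw [← hR.isComplement_range.card_right, ← Set.ncard_univ]
  refine Set.ncard_le_ncard_of_injOn (hR.quotientRep hJH) (fun _ _ => Set.mem_univ _) ?_
  intro q hq q' hq' h
  exact hR.quotientCoeff_prodMk_quotientRep_injective hJH (Prod.ext (hq.trans hq'.symm) h)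

theorem quotientCoeff_mul_schreierGenerator (hR : IsRepresentativeMap H R) (hJH : J ≤ H)
    (q : G ⧸ J) (s : G) :
    (hR.quotientCoeff hJH q : G ⧸ J) *
      ((hR.quotientRep hJH q * s * (R (hR.quotientRep hJH q * s))⁻¹ : G) : G ⧸ J) =
        hR.quotientCoeff hJH (q * (s : G ⧸ J)) := by
  induction q using QuotientGroup.induction_on with
  | H g =>
    change ((g * (R g)⁻¹ * (R g * s * (R (R g * s))⁻¹) : G) : G ⧸ J) =
      ((g * s * (R (g * s))⁻¹ : G) : G ⧸ J)
    rw [hR.apply_apply_mul]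
    group

/-- The map from the edges of `X(G/J; S)` to those of `X(H/J; Σ)` that sends the edge leaving `h t`
along `s` to the edge leaving `h` along the Schreier generator of `(t, s)`. -/
def schreierEdge (hR : IsRepresentativeMap H R) (hJH : J ≤ H) (S : Finset G)
    (e : (cayleyQuot G S J hJn).E) : (hR.schreierCayley S J).E :=
  (hR.quotientCoeff hJH e.1, hR.quotientRep hJH e.1, e.2)

theorem schreierEdge_injective (hR : IsRepresentativeMap H R) (hJH : J ≤ H) (S : Finset G) :
    Function.Injective (hR.schreierEdge hJH S) := by
  intro e e' h
  obtain ⟨hcoeff, hlabel⟩ := Prod.mk.inj h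
  obtain ⟨hrep, hs⟩ := Prod.mk.inj hlabel
  exact Prod.ext (hR.quotientCoeff_prodMk_quotientRep_injective hJH (Prod.ext hcoeff hrep)) hs

theorem ends_schreierEdge (hR : IsRepresentativeMap H R) (hJH : J ≤ H) (S : Finset G)
    (e : (cayleyQuot G S J hJn).E) :
    (hR.schreierCayley S J).ends (hR.schreierEdge hJH S e) =
      Prod.map (hR.quotientCoeff hJH) (hR.quotientCoeff hJH) ((cayleyQuot G S J hJn).ends e) :=
  Prod.ext rfl (Subtype.ext (hR.quotientCoeff_mul_schreierGenerator hJH e.1 e.2))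

end IsRepresentativeMap

theorem stmt7_general {G : Type*} [Group G] (S : Finset G) {H J : Subgroup G} [hJn : J.Normal]
    [J.FiniteIndex] (hJH : J ≤ H) {R : G → G} (hR : IsRepresentativeMap H R) :
    (cayleyQuot G S J hJn).width ≤ (hR.schreierCayley S J).width + 2 * S.card * H.index := by
  have : H.FiniteIndex := Subgroup.finiteIndex_of_le hJH
  have : Finite (Set.range R) := hR.isComplement_range.finite_right
  have : Finite (cayleyQuot G S J hJn).V := inferInstanceAs (Finite (G ⧸ J))
  have : Finite (hR.schreierCayley S J).V :=
    inferInstanceAs (Finite (H.map (QuotientGroup.mk' J)))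
  have : Finite (hR.schreierCayley S J).E :=
    inferInstanceAs (Finite (H.map (QuotientGroup.mk' J) × (Set.range R × S)))
  refine MultiGraph.width_le_width_add_of_injective (hR.schreierEdge_injective hJH S)
    (hR.ends_schreierEdge hJH S) fun v => ?_
  exact (ncard_incident_cayleyQuot_le S hJn _).trans
    (Nat.mul_le_mul_left _ (hR.ncard_quotientCoeff_fiber_le hJH v))

/-- **Lemma 3.3.** Let `G` be a group with finite generating set `S`, let `H ≥ J` be
finite index normal subgroups of `G`, and let `R : G → G` be the representative map of
a Schreier transversal `T = range R` of (right cosets of) `H` in `G`: representatives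
lie in the same coset, the map is constant on cosets, `R 1 = 1`, and every
representative is a product of a list of elements of `S ∪ S⁻¹` all of whose prefixes
are again representatives.  Let `Σ` be the associated Schreier generating set of `H`,
consisting of the elements `t·s·(R(t·s))⁻¹` for `t ∈ T`, `s ∈ S` (counted with
multiplicity, one for each pair `(t, s)`).  Then
`w(X(G/J; S)) ≤ w(X(H/J; Σ)) + 2|S|[G : H]`, where `X(H/J; Σ)` is the Cayley graph of
the group `H/J` (realised as the image of `H` in `G/J`) with respect to the images of
the elements of `Σ`. -/
theorem stmt7 (G : Type*) [Group G] (S : Finset G)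
    (hS : Subgroup.closure (S : Set G) = ⊤)
    (H J : Subgroup G) [hHn : H.Normal] [hJn : J.Normal]
    (hJH : J ≤ H) (hHfi : H.FiniteIndex) (hJfi : J.FiniteIndex)
    (R : G → G)
    (hR1 : ∀ g : G, g * (R g)⁻¹ ∈ H)
    (hR2 : ∀ g g' : G, g' * g⁻¹ ∈ H → R g' = R g)
    (hR3 : R 1 = 1)
    (hSchreier : ∀ g : G, ∃ l : List G,
      (∀ x ∈ l, x ∈ S ∨ x⁻¹ ∈ S) ∧ R g = l.prod ∧
      ∀ n : ℕ, (l.take n).prod ∈ Set.range R) :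
    (cayleyQuot G S J hJn).width ≤
      (MultiGraph.mk (↥(H.map (QuotientGroup.mk' J)))
        ((↥(H.map (QuotientGroup.mk' J))) × (↥(Set.range R) × {s // s ∈ S}))
        (fun p => (p.1, p.1 *
          ⟨QuotientGroup.mk ((p.2.1 : G) * (p.2.2 : G) * (R ((p.2.1 : G) * (p.2.2 : G)))⁻¹),
           Subgroup.mem_map.mpr ⟨_, hR1 _, rfl⟩⟩))).width
      + 2 * S.card * H.index :=
  stmt7_general S hJH ⟨hR1, hR2⟩
end

section
/- Let G be a group having a finite presentation with at least two more generators than relations (i.e. G = ⟨X | R⟩ with X, R finite and |X| − |R| ≥ 2). Then G has a finite index subgroup that admits a surjective homomorphism onto a non-abelian free group. -/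
/-!
A presentation with more generators than relations gives a surjection `θ : G → ℤ`: choosing the
image of each generator freely, there are fewer linear conditions than unknowns. Counting again,
now for 1-cocycles `D` of the free group with values in `ℤ[ℤ]` twisted by `θ`, the two extra
generators allow `D` to vanish on the relations and on some `τ` with `θ τ = 1` without being zero.
Thus `g ↦ (D g, θ g)` maps `G` to the lamplighter group `ℤ ≀ ℤ`, the image containing the
translation and a nontrivial lamp configuration.

Reduce `ℤ` modulo `2n` and replace a configuration `p` by the product of a copy of `p` in the
first color `u` and a copy of `p` in the second color `v` shifted by `n`, where `u` and `v` freely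
generate `F₂`. For fixed elements and large `n`, lamps of different colors sit at different places
and hence commute, so the resulting maps to `F₂ ≀ ℤ/2n` are multiplicative on any given pair of
elements once `n` is large. As `G` is finitely presented, for large `n` they can be corrected to
homomorphisms. A configuration and its translate by `n` now show powers of `u` and of `v` at a
common place, so they do not commute there, and the finite index subgroup of `G` acting trivially
on `ℤ/2n` maps to `F₂` with non-abelian image.
-/

section FreeGroups

theorem freeGroup_commute_of_subsingleton {ι : Type*} [Subsingleton ι] (g h : FreeGroup ι) :
    Commute g h := by
  cases isEmpty_or_nonempty ι
  · exact Subsingleton.elim _ _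
  · have : Unique ι := uniqueOfSubsingleton (Classical.arbitrary ι)
    exact (Commute.all _ _).of_map FreeGroup.mulEquivIntOfUnique.injective

theorem freeGroup_not_commute_zpow_zpow {ι : Type*} {x y : ι} (hxy : x ≠ y) {a b : ℤ} (ha : a ≠ 0)
    (hb : b ≠ 0) : ¬ Commute (FreeGroup.of x ^ a) (FreeGroup.of y ^ b) := by
  classical
  intro h
  let ρ : FreeGroup ι →* Matrix.SpecialLinearGroup (Fin 2) ℤ := FreeGroup.lift fun z =>
    if z = x then ModularGroup.T else ModularGroup.S * ModularGroup.T * ModularGroup.S⁻¹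
  have hx : ρ (FreeGroup.of x ^ a) = ModularGroup.T ^ a := by simp [ρ]
  have hy : ρ (FreeGroup.of y ^ b) = ModularGroup.S * ModularGroup.T ^ b * ModularGroup.S⁻¹ := by
    simp [ρ, hxy.symm, conj_zpow]
  have hρ := h.map ρ
  rw [hx, hy] at hρ
  have hentry : 1 - a * b = 1 := by
    simpa [ModularGroup.coe_T_zpow, ModularGroup.coe_S, Matrix.adjugate_fin_two, sub_eq_add_neg]
      using congrArg (fun g : Matrix.SpecialLinearGroup (Fin 2) ℤ => g 0 0) hρ.eq
  exact mul_ne_zero ha hb (by linarith)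

/-- A group is large if some subgroup of finite index maps onto the free group of rank two. -/
def IsLarge (G : Type*) [Group G] : Prop :=
  ∃ H : Subgroup G, H.FiniteIndex ∧ ∃ f : H →* FreeGroup (Fin 2), Function.Surjective f

theorem exists_surjective_freeGroup_of_not_commute {H ι : Type*} [Group H]
    (ρ : H →* FreeGroup ι) {x y : H} (hxy : ¬ Commute (ρ x) (ρ y)) :
    ∃ f : H →* FreeGroup (Fin 2), Function.Surjective f := by
  classical
  -- The range is free by the Nielsen–Schreier theorem.
  let e := IsFreeGroup.toFreeGroup ρ.range
  have hgen : Nontrivial (IsFreeGroup.Generators ρ.range) := by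
    by_contra hgen
    rw [not_nontrivial_iff_subsingleton] at hgen
    have hcomm : Commute (ρ.rangeRestrict x) (ρ.rangeRestrict y) :=
      (freeGroup_commute_of_subsingleton (e _) (e _)).of_map e.injective
    exact hxy (hcomm.map ρ.range.subtype)
  obtain ⟨i, j, hij⟩ := hgen
  let c : IsFreeGroup.Generators ρ.range → Fin 2 := fun k => if k = i then 0 else 1
  have hc : Function.Surjective c := by
    rw [Function.Surjective, Fin.forall_fin_two]
    exact ⟨⟨i, if_pos rfl⟩, ⟨j, if_neg hij.symm⟩⟩
  exact ⟨(FreeGroup.map c).comp (e.toMonoidHom.comp ρ.rangeRestrict),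
    (FreeGroup.map_surjective hc).comp (e.surjective.comp ρ.rangeRestrict_surjective)⟩

end FreeGroups

section WreathProduct

open RegularWreathProduct

/-- Evaluation at `i` on the base group of a wreath product, the base group being encoded as the
kernel of the projection to the acting group. -/
def evalKerRight {D P : Type*} [Group D] [Group P] (i : P) :
    (rightHom : D ≀ᵣ P →* P).ker →* D where
  toFun w := w.1.left i
  map_one' := rfl
  map_mul' w w' := by
    have hw : w.1.right = 1 := w.2
    simp [hw]

theorem isLarge_of_hom_wreath {G P ι : Type*} [Group G] [Group P] [Finite P]
    (φ : G →* FreeGroup ι ≀ᵣ P) {g h : G} (hg : (φ g).right = 1) (hh : (φ h).right = 1) (i : P)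
    (hgh : ¬ Commute ((φ g).left i) ((φ h).left i)) : IsLarge G :=
  ⟨(rightHom.comp φ).ker, inferInstance, exists_surjective_freeGroup_of_not_commute
    ((evalKerRight i).comp (φ.subgroupComap rightHom.ker)) (x := ⟨g, hg⟩) (y := ⟨h, hh⟩) hgh⟩

end WreathProduct

section AsymptoticHomomorphisms

open Filter

variable {α ι : Type*} {W : ι → Type*} [∀ i, Group (W i)] {l : Filter ι}
  {E : ∀ i, FreeGroup α → W i}

theorem eventually_freeGroup_lift_eq (hE : ∀ g h, ∀ᶠ i in l, E i (g * h) = E i g * E i h)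
    (g : FreeGroup α) : ∀ᶠ i in l, FreeGroup.lift (fun x => E i (.of x)) g = E i g := by
  have hone : ∀ᶠ i in l, E i 1 = 1 := by
    filter_upwards [hE 1 1] with i hi using by simpa using hi
  induction g using FreeGroup.induction_on with
  | C1 => simpa [eq_comm] using hone
  | of x => simp
  | inv_of x _ =>
    filter_upwards [hE (.of x)⁻¹ (.of x), hone] with i hmul hone
    rw [inv_mul_cancel, hone] at hmul
    simpa using inv_eq_of_mul_eq_one_left hmul.symm
  | mul g h hg hh =>
    filter_upwards [hE g h, hg, hh] with i hmul hg hh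
    rw [map_mul, hg, hh, hmul]

theorem eventually_exists_comp_eq_lift {G : Type*} [Group G] {π : FreeGroup α →* G}
    (hπ : Function.Surjective π) {R : Set (FreeGroup α)} (hR : R.Finite)
    (hker : π.ker = Subgroup.normalClosure R)
    (hE : ∀ g h, ∀ᶠ i in l, E i (g * h) = E i g * E i h)
    (hER : ∀ r ∈ R, ∀ᶠ i in l, E i r = 1) :
    ∀ᶠ i in l, ∃ φ : G →* W i, φ.comp π = FreeGroup.lift fun x => E i (.of x) := by
  have hlift : ∀ᶠ i in l, ∀ r ∈ R, FreeGroup.lift (fun x => E i (.of x)) r = 1 :=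
    (eventually_all_finite hR).2 fun r hr => by
      filter_upwards [eventually_freeGroup_lift_eq hE r, hER r hr] with i h h' using h.trans h'
  filter_upwards [hlift] with i hi
  have hle : π.ker ≤ (FreeGroup.lift fun x => E i (.of x)).ker :=
    hker ▸ Subgroup.normalClosure_le_normal hi
  exact ⟨π.liftOfSurjective hπ ⟨_, hle⟩, MonoidHom.liftOfRightInverse_comp _ _ _ _⟩

end AsymptoticHomomorphisms

section Cocycles

open groupCohomology

universe u w

variable {k G α : Type u} [CommRing k] [Group G]

/-- The subgroup on which a 1-cocycle vanishes. -/
def cocycleVanishingSubgroup {A : Rep.{w} k G} (f : cocycles₁ A) : Subgroup G where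
  carrier := {g | f g = 0}
  one_mem' := cocycles₁_map_one f
  mul_mem' {g h} (hg : f g = 0) (hh : f h = 0) := show f (g * h) = 0 by
    rw [(mem_cocycles₁_iff f).1 f.2, hg, hh, map_zero, add_zero]
  inv_mem' {g} (hg : f g = 0) := (A.ρ.apply_bijective g).1 <| by
    rw [cocycles₁_map_inv, hg, neg_zero, map_zero]

theorem cocycles₁_eq_zero_of_forall_generator {A : Rep.{w} k (FreeGroup α)} {f : cocycles₁ A}
    (hf : ∀ x, f (.of x) = 0) : f = 0 := by
  have htop : cocycleVanishingSubgroup f = ⊤ := by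
    rw [eq_top_iff, ← FreeGroup.closure_range_of, Subgroup.closure_le]
    exact Set.range_subset_iff.2 hf
  exact cocycles₁_ext fun g => show g ∈ cocycleVanishingSubgroup f from htop ▸ Subgroup.mem_top g

/-- The affine permutation `m ↦ ρ g m + v` of a representation; a cocycle amounts to a
homomorphism to affine permutations. -/
def affinePerm {V : Type w} [AddCommGroup V] [Module k V] (ρ : Representation k G V) (g : G)
    (v : V) : Equiv.Perm V where
  toFun m := ρ g m + v
  invFun m := ρ g⁻¹ (m - v)
  left_inv m := by simp
  right_inv m := by simp

theorem exists_cocycles₁_eq_on_generators (A : Rep.{w} k (FreeGroup α)) (a : α → A) :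
    ∃ f : cocycles₁ A, ∀ x, f (.of x) = a x := by
  let φ : FreeGroup α →* Equiv.Perm A := FreeGroup.lift fun x => affinePerm A.ρ (.of x) (a x)
  have hφ (g : FreeGroup α) : ∀ m, φ g m = A.ρ g m + φ g 0 := by
    induction g using FreeGroup.induction_on with
    | C1 => simp
    | of x => simp [φ, affinePerm]
    | inv_of x _ => simp [φ, affinePerm, Equiv.Perm.inv_def, sub_eq_add_neg]
    | mul g h hg hh =>
      intro m
      rw [map_mul, Equiv.Perm.mul_apply, hh, hg, Equiv.Perm.mul_apply, hg (φ h 0)]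
      simp [add_assoc]
  refine ⟨⟨fun g => φ g 0, (mem_cocycles₁_iff _).2 fun g h => ?_⟩, fun x => ?_⟩
  · rw [map_mul, Equiv.Perm.mul_apply, hφ]
  · simp [φ, affinePerm]

/-- A 1-cocycle of a free group is an arbitrary choice of values on the generators. -/
noncomputable def freeGroupCocycles₁Equiv (A : Rep.{w} k (FreeGroup α)) :
    cocycles₁ A ≃ₗ[k] (α → A) :=
  LinearEquiv.ofBijective ((LinearMap.funLeft k A FreeGroup.of).comp (cocycles₁ A).subtype)
    ⟨(injective_iff_map_eq_zero _).2 fun _ hf =>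
        cocycles₁_eq_zero_of_forall_generator (congrFun hf),
      fun a => (exists_cocycles₁_eq_on_generators A a).imp fun _ hf => funext hf⟩

theorem exists_cocycles₁_ne_zero_of_card_lt [Fintype α] (A : Rep.{w} k (FreeGroup α))
    [Nontrivial A] [Module.Free k A] [Module.Finite k A]
    (S : Finset (FreeGroup α)) (hS : S.card < Fintype.card α) :
    ∃ f : cocycles₁ A, (∀ r ∈ S, f r = 0) ∧ ∃ x, f (.of x) ≠ 0 := by
  have : Nontrivial k := Module.nontrivial k A
  let restrict : cocycles₁ A →ₗ[k] (S → A) :=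
    (LinearMap.funLeft k A Subtype.val).comp (cocycles₁ A).subtype
  have hrestrict : ¬ Function.Injective restrict := by
    intro h
    have hle := LinearMap.finrank_le_finrank_of_injective
      (f := restrict.comp (freeGroupCocycles₁Equiv A).symm.toLinearMap)
      (h.comp (LinearEquiv.injective _))
    have hpos : 0 < Module.finrank k A := (Module.finrank_pos_iff_of_free k A).2 ‹Nontrivial A›
    simp only [Module.finrank_pi_fintype, Finset.sum_const, Finset.card_univ, smul_eq_mul,
      Fintype.card_coe] at hle
    exact hS.not_ge (Nat.le_of_mul_le_mul_right hle hpos)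
  rw [injective_iff_map_eq_zero] at hrestrict
  push Not at hrestrict
  obtain ⟨f, hf, hf0⟩ := hrestrict
  refine ⟨f, fun r hr => congrFun hf ⟨r, hr⟩, ?_⟩
  by_contra! h
  exact hf0 (cocycles₁_eq_zero_of_forall_generator h)

end Cocycles

section InfiniteCyclicQuotient

theorem exists_surjective_ker_eq_of_ne_one {G : Type*} [Group G] {θ : G →* Multiplicative ℤ}
    (hθ : θ ≠ 1) : ∃ θ' : G →* Multiplicative ℤ, Function.Surjective θ' ∧ θ'.ker = θ.ker := by
  have : Nontrivial θ.range := by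
    rwa [Subgroup.nontrivial_iff_ne_bot, Ne, MonoidHom.range_eq_bot_iff]
  exact ⟨intCyclicMulEquiv.symm.toMonoidHom.comp θ.rangeRestrict,
    intCyclicMulEquiv.symm.surjective.comp θ.rangeRestrict_surjective, by ext; simp⟩

theorem exists_surjective_int_of_card_lt {α : Type} [Fintype α] (S : Finset (FreeGroup α))
    (hS : S.card < Fintype.card α) :
    ∃ θ : FreeGroup α →* Multiplicative ℤ, Function.Surjective θ ∧ ∀ r ∈ S, θ r = 1 := by
  obtain ⟨f, hf, x, hx⟩ :=
    exists_cocycles₁_ne_zero_of_card_lt (Rep.trivial ℤ (FreeGroup α) ℤ) S hS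
  let θ : FreeGroup α →* Multiplicative ℤ := MonoidHom.mk' (fun g => .ofAdd (f g))
    fun g h => congrArg Multiplicative.ofAdd (groupCohomology.cocycles₁_map_mul_of_isTrivial f g h)
  have hθ : θ ≠ 1 := fun h => hx (congrArg Multiplicative.toAdd (DFunLike.congr_fun h (.of x)))
  obtain ⟨θ', hsurj, hker⟩ := exists_surjective_ker_eq_of_ne_one hθ
  refine ⟨θ', hsurj, fun r hr => ?_⟩
  rw [← MonoidHom.mem_ker, hker]
  exact hf r hr

end InfiniteCyclicQuotient

section TwoColors

open scoped MonoidAlgebra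

variable {F P : Type*} [Group F] [Group P]

/-- The configuration `p : P → ℤ` recolored with `u`, times its translate by `c` recolored with
`v`. The group ring `ℤ[P]` serves as the group of finitely supported configurations. -/
def twoColor (u v : F) (c : P) (p : ℤ[P]) (i : P) : F :=
  u ^ p.coeff i * v ^ p.coeff (c⁻¹ * i)

@[simp]
theorem twoColor_zero (u v : F) (c : P) : twoColor u v c 0 = 1 := by
  ext
  simp [twoColor]

theorem twoColor_add (u v : F) {c : P} {p q : ℤ[P]}
    (h : ∀ i, p.coeff (c⁻¹ * i) = 0 ∨ q.coeff i = 0) :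
    twoColor u v c (p + q) = twoColor u v c p * twoColor u v c q := by
  ext i
  have hcomm : Commute (v ^ p.coeff (c⁻¹ * i)) (u ^ q.coeff i) := by
    obtain h | h := h i <;> simp [h]
  simp only [twoColor, Pi.mul_apply, MonoidAlgebra.coeff_add, Finsupp.add_apply, zpow_add]
  rw [mul_assoc, mul_assoc, hcomm.left_comm]

theorem twoColor_of_mul {Q : Type*} [CommGroup Q] (u v : F) (c j : Q) (p : ℤ[Q]) (i : Q) :
    twoColor u v c (.of ℤ Q j * p) i = twoColor u v c p (j⁻¹ * i) := by
  simp [twoColor, mul_left_comm]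

theorem not_commute_twoColor {ι : Type*} {x y : ι} (hxy : x ≠ y) {c : P} {p : ℤ[P]}
    (hp : ∀ i, p.coeff (c⁻¹ * i) = 0 ∨ p.coeff i = 0) {i : P} (hi : p.coeff i ≠ 0) :
    ¬ Commute (twoColor (FreeGroup.of x) (FreeGroup.of y) c p i)
      (twoColor (FreeGroup.of x) (FreeGroup.of y) c p (c * i)) := by
  have hleft : p.coeff (c⁻¹ * i) = 0 := (hp i).resolve_right hi
  have hright : p.coeff (c * i) = 0 := (hp (c * i)).resolve_left (by simpa using hi)
  simpa [twoColor, hleft, hright] using freeGroup_not_commute_zpow_zpow hxy hi hi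

theorem isLarge_of_hom_wreath_eq_twoColor [Finite P] {G ι : Type*} [Group G] {x y : ι}
    (hxy : x ≠ y) (φ : G →* FreeGroup ι ≀ᵣ P) {s g : G} {c : P} {p : ℤ[P]}
    (hs : φ s = RegularWreathProduct.inl c)
    (hg : φ g = ⟨twoColor (FreeGroup.of x) (FreeGroup.of y) c p, 1⟩)
    (hdisj : ∀ i, p.coeff (c⁻¹ * i) = 0 ∨ p.coeff i = 0) (hp : p ≠ 0) : IsLarge G := by
  obtain ⟨i, hi⟩ := Finsupp.ne_iff.1 (show p.coeff ≠ 0 by simpa)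
  have hconj : (φ (s * g * s⁻¹)).right = 1 := by simp [hg]
  have hleft : (φ (s * g * s⁻¹)).left (c * i) = (φ g).left i := by simp [hs, hg]
  refine isLarge_of_hom_wreath φ hconj (by rw [hg]) (c * i) ?_
  rw [hleft, hg]
  exact not_commute_twoColor hxy hdisj hi

end TwoColors

section ReductionModulo

open Filter
open scoped MonoidAlgebra

/-- Reduction `ℤ → ℤ/m`, written multiplicatively. -/
def modHom (m : ℕ) : Multiplicative ℤ →* Multiplicative (ZMod m) :=
  (Int.castAddHom (ZMod m)).toMultiplicative

theorem modHom_eq_modHom_iff {m : ℕ} {a b : Multiplicative ℤ} :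
    modHom m a = modHom m b ↔ (m : ℤ) ∣ b.toAdd - a.toAdd :=
  ZMod.intCast_eq_intCast_iff_dvd_sub _ _ _

theorem eventually_modHom_ne {a b : Multiplicative ℤ} (hab : a ≠ b) :
    ∀ᶠ m : ℕ in atTop, modHom m a ≠ modHom m b := by
  filter_upwards [tendsto_natCast_atTop_atTop.eventually_gt_atTop |b.toAdd - a.toAdd|]
    with m hm h
  have hzero := Int.eq_zero_of_abs_lt_dvd (modHom_eq_modHom_iff.1 h) hm
  exact hab (Multiplicative.toAdd.injective (sub_eq_zero.1 hzero).symm)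

theorem eventually_modHom_ofAdd_mul_ne (a b : Multiplicative ℤ) :
    ∀ᶠ n : ℕ in atTop, modHom (2 * n) (.ofAdd n * a) ≠ modHom (2 * n) b := by
  filter_upwards [tendsto_natCast_atTop_atTop.eventually_gt_atTop |b.toAdd - a.toAdd|]
    with n hn h
  rw [modHom_eq_modHom_iff, toAdd_mul, toAdd_ofAdd] at h
  rw [abs_lt] at hn
  have hzero := Int.eq_zero_of_abs_lt_dvd h (by rw [abs_lt]; push_cast; lia)
  lia

theorem eventually_mapDomain_modHom_coeff_eq_zero (p q : ℤ[Multiplicative ℤ]) :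
    ∀ᶠ n : ℕ in atTop, ∀ i,
      (p.mapDomain (modHom (2 * n))).coeff ((modHom (2 * n) (.ofAdd n))⁻¹ * i) = 0 ∨
        (q.mapDomain (modHom (2 * n))).coeff i = 0 := by
  have hne : ∀ᶠ n : ℕ in atTop, ∀ a ∈ p.coeff.support, ∀ b ∈ q.coeff.support,
      modHom (2 * n) (.ofAdd n * a) ≠ modHom (2 * n) b := by
    simp only [Finset.eventually_all]
    exact fun a _ b _ => eventually_modHom_ofAdd_mul_ne a b
  filter_upwards [hne] with n hn i
  by_contra! h
  obtain ⟨a, ha, hai⟩ :=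
    Finset.mem_image.1 (Finsupp.mapDomain_support (Finsupp.mem_support_iff.2 h.1))
  obtain ⟨b, hb, hbi⟩ :=
    Finset.mem_image.1 (Finsupp.mapDomain_support (Finsupp.mem_support_iff.2 h.2))
  exact hn a ha b hb (by rw [map_mul, hai, hbi, mul_inv_cancel_left])

theorem eventually_mapDomain_modHom_ne_zero {p : ℤ[Multiplicative ℤ]} (hp : p ≠ 0) :
    ∀ᶠ m : ℕ in atTop, p.mapDomain (modHom m) ≠ 0 := by
  have hinj : ∀ᶠ m : ℕ in atTop, ∀ a ∈ p.coeff.support, ∀ b ∈ p.coeff.support, a ≠ b →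
      modHom m a ≠ modHom m b := by
    simp only [Finset.eventually_all, eventually_imp_distrib_left]
    exact fun a _ b _ hab => eventually_modHom_ne hab
  obtain ⟨a, ha⟩ := Finsupp.ne_iff.1 (show p.coeff ≠ 0 by simpa)
  filter_upwards [hinj] with m hm h
  have hmap : (p.mapDomain (modHom m)).coeff (modHom m a) = p.coeff a :=
    Finsupp.mapDomain_apply' p.coeff.support p.coeff subset_rfl
      (fun a ha b hb => not_imp_not.1 (hm a ha b hb)) (Finsupp.mem_support_iff.2 ha)
  exact ha (hmap.symm.trans (by rw [h]; rfl))

end ReductionModulo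

section Lamplighter

open Filter groupCohomology
open scoped MonoidAlgebra

variable {Γ : Type} [Group Γ] {θ : Γ →* Multiplicative ℤ}

/-- The representation of `Γ` on the Laurent polynomial ring `ℤ[ℤ]` in which `g` acts as
multiplication by the monomial `θ g`. For a cocycle `D` of it, `g ↦ (D g, θ g)` is a homomorphism
from `Γ` to `ℤ ≀ ℤ`. -/
noncomputable abbrev laurentRep (θ : Γ →* Multiplicative ℤ) : Rep ℤ[Multiplicative ℤ] Γ :=
  Rep.of (((Algebra.lmul ℤ[Multiplicative ℤ] ℤ[Multiplicative ℤ] :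
    ℤ[Multiplicative ℤ] →* Module.End ℤ[Multiplicative ℤ] ℤ[Multiplicative ℤ]).comp
      (MonoidAlgebra.of ℤ (Multiplicative ℤ))).comp θ : Representation _ _ _)

theorem laurentRep_cocycle_mul (D : cocycles₁ (laurentRep θ)) (g h : Γ) :
    D (g * h) = MonoidAlgebra.of ℤ (Multiplicative ℤ) (θ g) * D h + D g :=
  (mem_cocycles₁_iff D).1 D.2 g h

theorem exists_map_eq_one_of_cocycle_ne_zero {D : cocycles₁ (laurentRep θ)} {τ g : Γ}
    (hτ : θ τ = .ofAdd 1) (hDτ : D τ = 0) (hDg : D g ≠ 0) : ∃ g₀, θ g₀ = 1 ∧ D g₀ ≠ 0 := by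
  have hpow : D (τ ^ (-(θ g).toAdd)) = 0 :=
    (cocycleVanishingSubgroup D).zpow_mem hDτ _
  refine ⟨g * τ ^ (-(θ g).toAdd), ?_, ?_⟩
  · rw [map_mul, map_zpow, hτ, ← ofAdd_zsmul]
    simp
  · rwa [laurentRep_cocycle_mul, hpow, mul_zero, zero_add]

/-- The two-colored reduction modulo `2n` of the homomorphism `g ↦ (D g, θ g)`, the second
color being shifted by `n`. It is multiplicative only asymptotically in `n`. -/
noncomputable def twoColorWreath (D : cocycles₁ (laurentRep θ)) (n : ℕ) (g : Γ) :
    FreeGroup (Fin 2) ≀ᵣ Multiplicative (ZMod (2 * n)) where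
  left := twoColor (.of 0) (.of 1) (modHom (2 * n) (.ofAdd n))
    (MonoidAlgebra.mapDomain (modHom (2 * n)) (D g))
  right := modHom (2 * n) (θ g)

theorem twoColorWreath_eq_inl {D : cocycles₁ (laurentRep θ)} (n : ℕ) {g : Γ} (hg : D g = 0) :
    twoColorWreath D n g = RegularWreathProduct.inl (modHom (2 * n) (θ g)) := by
  ext i
  · simp [twoColorWreath, hg]
  · rfl

theorem eventually_twoColorWreath_mul (D : cocycles₁ (laurentRep θ)) (g h : Γ) :
    ∀ᶠ n in atTop,
      twoColorWreath D n (g * h) = twoColorWreath D n g * twoColorWreath D n h := by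
  filter_upwards [eventually_mapDomain_modHom_coeff_eq_zero (D g)
    (MonoidAlgebra.of ℤ (Multiplicative ℤ) (θ g) * D h)] with n hn
  refine RegularWreathProduct.ext ?_ (by simp [twoColorWreath])
  ext1 i
  simp only [twoColorWreath, RegularWreathProduct.mul_left, laurentRep_cocycle_mul]
  rw [add_comm, MonoidAlgebra.mapDomain_add, twoColor_add _ _ hn, MonoidAlgebra.mapDomain_mul,
    Pi.mul_apply, Pi.mul_apply, ← twoColor_of_mul]
  simp

theorem isLarge_of_cocycle {α : Type} {G : Type*} [Group G] {π : FreeGroup α →* G}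
    (hπ : Function.Surjective π) {R : Set (FreeGroup α)} (hR : R.Finite)
    (hker : π.ker = Subgroup.normalClosure R) {θ : FreeGroup α →* Multiplicative ℤ}
    (hθ : ∀ r ∈ R, θ r = 1) {D : cocycles₁ (laurentRep θ)} (hD : ∀ r ∈ R, D r = 0)
    {τ g : FreeGroup α} (hτ : θ τ = .ofAdd 1) (hDτ : D τ = 0) (hDg : D g ≠ 0) : IsLarge G := by
  obtain ⟨g₀, hg₀, hDg₀⟩ := exists_map_eq_one_of_cocycle_ne_zero hτ hDτ hDg
  have hmul := eventually_twoColorWreath_mul D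
  have hrel : ∀ r ∈ R, ∀ᶠ n in atTop, twoColorWreath D n r = 1 := fun r hr =>
    .of_forall fun n => by rw [twoColorWreath_eq_inl n (hD r hr), hθ r hr, map_one, map_one]
  obtain ⟨n, ⟨φ, hφ⟩, hφτ, hφg₀, hne, hdisj, hn⟩ :=
    ((eventually_exists_comp_eq_lift hπ hR hker hmul hrel).and <|
      (eventually_freeGroup_lift_eq hmul τ).and <| (eventually_freeGroup_lift_eq hmul g₀).and <|
      ((tendsto_id.const_mul_atTop' two_pos).eventually
        (eventually_mapDomain_modHom_ne_zero hDg₀)).and <|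
      (eventually_mapDomain_modHom_coeff_eq_zero (D g₀) (D g₀)).and
        (eventually_ne_atTop 0)).exists
  have : NeZero n := ⟨hn⟩
  rw [← hφ, MonoidHom.comp_apply] at hφτ hφg₀
  have hshift : φ (π τ ^ n) = RegularWreathProduct.inl (modHom (2 * n) (.ofAdd n)) := by
    rw [map_pow, hφτ, twoColorWreath_eq_inl n hDτ, hτ, ← map_pow, ← map_pow, ← ofAdd_nsmul,
      nsmul_one]
  refine isLarge_of_hom_wreath_eq_twoColor Fin.zero_ne_one φ hshift (hφg₀.trans ?_) hdisj hne
  rw [twoColorWreath, hg₀, map_one]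

end Lamplighter

/-- **Corollary 1.3 (Baumslag–Pride).** Let `G` be a group having a finite presentation
with at least two more generators than relations (here `π` is the quotient map from the
free group on the finite type `α` of generators, whose kernel is the normal closure of
the finite set `Rel` of relations, with `|α| ≥ |Rel| + 2`).  Then `G` has a finite index
subgroup that admits a surjective homomorphism onto a non-abelian free group. -/
theorem stmt11 (G : Type*) [Group G]
    (α : Type) [Fintype α]
    (π : FreeGroup α →* G) (hsurj : Function.Surjective π)
    (Rel : Finset (FreeGroup α))
    (hker : π.ker = Subgroup.normalClosure (Rel : Set (FreeGroup α)))
    (hcard : Rel.card + 2 ≤ Fintype.card α) :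
    ∃ H : Subgroup G, H.FiniteIndex ∧
      ∃ f : ↥H →* FreeGroup (Fin 2), Function.Surjective f := by
  obtain ⟨θ, hθsurj, hθ⟩ := exists_surjective_int_of_card_lt Rel (by lia)
  obtain ⟨τ, hτ⟩ := hθsurj (.ofAdd 1)
  classical
  obtain ⟨D, hD, x, hx⟩ := exists_cocycles₁_ne_zero_of_card_lt (laurentRep θ) (insert τ Rel)
    ((Finset.card_insert_le τ Rel).trans_lt (by lia))
  exact isLarge_of_cocycle hsurj Rel.finite_toSet hker hθ
    (fun r hr => hD r (Finset.mem_insert_of_mem hr)) hτ (hD τ (Finset.mem_insert_self τ Rel)) hx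
end

section
/- Let G be a group having a finite presentation with one more generator than relations (i.e. G = ⟨X | R⟩ with X, R finite and |X| − |R| = 1), and suppose that one of the relations in R is a proper power, i.e. equals w^q in the free group on X for some word w and some integer q ≥ 2. Then G has a finite index subgroup that admits a surjective homomorphism onto a non-abelian free group. -/
namespace IsLarge

variable {G Q : Type*} [Group G] [Group Q]

theorem of_surjective (hQ : IsLarge Q) (f : G →* Q) (hf : Function.Surjective f) : IsLarge G := by
  obtain ⟨H, hH, g, hg⟩ := hQ
  refine ⟨H.comap f, ⟨?_⟩, g.comp (f.subgroupComap H),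
    hg.comp (f.subgroupComap_surjective_of_surjective H hf)⟩
  rw [Subgroup.index_comap_of_surjective H hf]
  exact hH.index_ne_zero

theorem of_finiteIndex (K : Subgroup G) [hK : K.FiniteIndex] (h : IsLarge K) : IsLarge G := by
  obtain ⟨H, hH, g, hg⟩ := h
  let e := H.equivMapOfInjective K.subtype K.subtype_injective
  refine ⟨H.map K.subtype, ⟨?_⟩, g.comp e.symm.toMonoidHom, hg.comp e.symm.surjective⟩
  rw [Subgroup.index_map_subtype]
  exact mul_ne_zero hH.index_ne_zero hK.index_ne_zero

theorem of_finiteIndex_of_le_ker {F : Type*} [Group F] (hQ : IsLarge Q) {π : F →* G}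
    (hπ : Function.Surjective π) (K : Subgroup F) [hK : K.FiniteIndex] {f : K →* Q}
    (hf : Function.Surjective f) (hker : (π.subgroupMap K).ker ≤ f.ker) : IsLarge G := by
  have : (K.map π).FiniteIndex := ⟨ne_zero_of_dvd_ne_zero hK.index_ne_zero (K.index_map_dvd hπ)⟩
  have hs := π.subgroupMap_surjective K
  refine of_finiteIndex (K.map π)
    (hQ.of_surjective ((π.subgroupMap K).liftOfSurjective hs ⟨f, hker⟩) fun y => ?_)
  obtain ⟨x, rfl⟩ := hf y
  exact ⟨π.subgroupMap K x, MonoidHom.liftOfRightInverse_comp_apply _ _ _ _ x⟩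

end IsLarge

theorem isLarge_freeGroup (C : Type*) [Nontrivial C] : IsLarge (FreeGroup C) := by
  obtain ⟨c, d, hcd⟩ := exists_pair_ne C
  have hinj : Function.Injective ![c, d] := by
    simpa [Function.Injective, Fin.forall_fin_two] using ⟨hcd, hcd.symm⟩
  exact ⟨⊤, inferInstance, (FreeGroup.map (Function.invFun ![c, d])).comp (Subgroup.subtype ⊤),
    (FreeGroup.map_surjective (Function.invFun_surjective hinj)).comp
      fun x => ⟨⟨x, Subgroup.mem_top x⟩, rfl⟩⟩

theorem exists_ne_one_map_eq_one_of_card_lt {G H : Type*} [Group G] [Group H] [Finite H]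
    (f : G →* H) (h : Nat.card H < Nat.card G) : ∃ g ≠ 1, f g = 1 := by
  by_contra! hf
  have hinj : Function.Injective f :=
    (injective_iff_map_eq_one f).2 fun g hg => by_contra fun hg1 => hf g hg1 hg
  exact (Nat.card_le_card_of_injective f hinj).not_gt h

section FreeTranslation

/-- The action of a group `C` by left translation of the basis of the free group on `C`. -/
def translateAut (C : Type*) [Group C] : C →* MulAut (FreeGroup C) where
  toFun c := FreeGroup.freeGroupCongr (Equiv.mulLeft c)
  map_one' := MulEquiv.toMonoidHom_injective (by ext; simp)
  map_mul' c d := MulEquiv.toMonoidHom_injective (by ext; simp [mul_assoc])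

/-- The free product of `ℤ` and `C`, encoded as the extension of `C` by the free group on the
conjugates of the generator of `ℤ` under `C`. -/
abbrev IntFreeProd (C : Type*) [Group C] : Type _ :=
  FreeGroup C ⋊[translateAut C] C

variable (C : Type*) [Group C]

theorem isLarge_intFreeProd [Finite C] [Nontrivial C] : IsLarge (IntFreeProd C) := by
  let N := (SemidirectProduct.inl : FreeGroup C →* IntFreeProd C).range
  have : N.FiniteIndex := by
    rw [show N = _ from SemidirectProduct.range_inl_eq_ker_rightHom]
    infer_instance
  let equiv := MonoidHom.ofInjective (SemidirectProduct.inl_injective (φ := translateAut C))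
  exact .of_finiteIndex N <|
    (isLarge_freeGroup C).of_surjective equiv.symm.toMonoidHom equiv.symm.surjective

variable {C}

theorem eq_top_of_range_inr_le_of_inl_of_one_mem {S : Subgroup (IntFreeProd C)}
    (hl : SemidirectProduct.inl (FreeGroup.of 1) ∈ S)
    (hr : (SemidirectProduct.inr : C →* IntFreeProd C).range ≤ S) : S = ⊤ := by
  have hr' (c : C) : (SemidirectProduct.inr c : IntFreeProd C) ∈ S := hr ⟨c, rfl⟩
  have hS : (⊤ : Subgroup (FreeGroup C)) ≤ S.comap SemidirectProduct.inl := by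
    rw [← FreeGroup.closure_range_of, Subgroup.closure_le]
    rintro _ ⟨c, rfl⟩
    have hc : translateAut C c (FreeGroup.of 1) = FreeGroup.of c := by simp [translateAut]
    change SemidirectProduct.inl (FreeGroup.of c) ∈ S
    rw [← hc, SemidirectProduct.inl_aut]
    exact mul_mem (mul_mem (hr' c) hl) (hr' c⁻¹)
  refine (Subgroup.eq_top_iff' S).2 fun x => ?_
  rw [← SemidirectProduct.inl_left_mul_inr_right x]
  exact mul_mem (hS (Subgroup.mem_top x.left)) (hr' x.right)

end FreeTranslation

section Height

variable {ι J : Type*} [AddCommGroup J] (e : ι → J)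

/-- The homomorphism from a free group to the additive group `J` with prescribed values `e` on the
generators. -/
def heightHom : FreeGroup ι →* Multiplicative J :=
  FreeGroup.lift fun i => Multiplicative.ofAdd (e i)

/-- `heightHom` with its value read in `J`, so that it can be used as a displacement. -/
def height (x : FreeGroup ι) : J :=
  (heightHom e x).toAdd

variable (x y : FreeGroup ι)

@[simp] theorem height_of (i : ι) : height e (.of i) = e i := by simp [height, heightHom]

@[simp] theorem height_one : height e 1 = 0 := by simp [height, heightHom]

@[simp] theorem height_mul : height e (x * y) = height e x + height e y := by
  simp [height, heightHom]

@[simp] theorem height_inv : height e x⁻¹ = -height e x := by simp [height, heightHom]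

@[simp] theorem height_pow (n : ℕ) : height e (x ^ n) = n • height e x := by
  simp [height, heightHom]

@[simp] theorem height_zpow (n : ℤ) : height e (x ^ n) = n • height e x := by
  simp [height, heightHom]

theorem height_add (e e' : ι → J) : height (e + e') x = height e x + height e' x := by
  have h : heightHom (e + e') = heightHom e * heightHom e' := by
    ext
    simp [heightHom]
  exact congrArg Multiplicative.toAdd (DFunLike.congr_fun h x)

theorem exists_ne_zero_forall_height_eq_zero [Fintype ι] {R : Finset (FreeGroup ι)}
    (h : R.card < Fintype.card ι) : ∃ c : ι → ℤ, c ≠ 0 ∧ ∀ r ∈ R, height c r = 0 := by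
  let L : (ι → ℤ) →+ (R → ℤ) :=
    AddMonoidHom.mk' (fun c r => height c r) fun c c' => funext fun r => height_add r.1 c c'
  have hL : ¬ Function.Injective L := fun hinj =>
    (card_le_of_injective ℤ L.toIntLinearMap hinj).not_gt (by simpa)
  simp only [injective_iff_map_eq_zero, not_forall] at hL
  obtain ⟨c, hc, hc0⟩ := hL
  exact ⟨c, hc0, fun r hr => congrFun hc ⟨r, hr⟩⟩

theorem exists_height_eq_one_of_ne_zero {c : ι → ℤ} (hc : c ≠ 0) :
    ∃ e : ι → ℤ, (∀ x, height c x = 0 → height e x = 0) ∧ ∃ u, height e u = 1 := by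
  let χ := heightHom c
  have hχ : Nontrivial χ.range := by
    obtain ⟨i, hi⟩ := Function.ne_iff.1 hc
    refine ⟨⟨χ (.of i), .of i, rfl⟩, 1, fun h => hi ?_⟩
    simpa [χ, heightHom] using congrArg Subtype.val h
  have : Infinite χ.range := inferInstance
  let ψ : χ.range ≃* Multiplicative ℤ := mulEquivOfCyclicCardEq <| by
    rw [Nat.card_eq_zero_of_infinite, Nat.card_eq_zero_of_infinite]
  have hψ (x) : height (fun i => (ψ (χ.rangeRestrict (.of i))).toAdd) x =
      (ψ (χ.rangeRestrict x)).toAdd := by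
    have : heightHom (fun i => (ψ (χ.rangeRestrict (.of i))).toAdd) =
        ψ.toMonoidHom.comp χ.rangeRestrict := by
      ext
      simp [heightHom]
    exact congrArg Multiplicative.toAdd (DFunLike.congr_fun this x)
  refine ⟨fun i => (ψ (χ.rangeRestrict (.of i))).toAdd, fun x hx => ?_, ?_⟩
  · rw [hψ, show χ.rangeRestrict x = 1 from Subtype.ext hx, map_one, toAdd_one]
  · obtain ⟨u, hu⟩ := χ.rangeRestrict_surjective (ψ.symm (.ofAdd 1))
    exact ⟨u, by simp [hψ, hu]⟩

theorem exists_height_eq_one_of_card_lt [Fintype ι] {R : Finset (FreeGroup ι)}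
    (h : R.card < Fintype.card ι) :
    ∃ e : ι → ℤ, (∀ r ∈ R, height e r = 0) ∧ ∃ u, height e u = 1 := by
  obtain ⟨c, hc, hcR⟩ := exists_ne_zero_forall_height_eq_zero h
  obtain ⟨e, he, hu⟩ := exists_height_eq_one_of_ne_zero hc
  exact ⟨e, fun r hr => he r (hcR r hr), hu⟩

end Height

section Holonomy

variable {ι J A B : Type*} [AddCommGroup J] [Group A] [Group B]
  (e : ι → J) (a : ι → J → A) (x y : FreeGroup ι) (j : J)

/-- The homomorphism to the wreath product whose second component is `-height e` and whose first
component is the holonomy. The multiplication of `RegularWreathProduct` translates by the inverse of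
the second component, and the sign turns this into a translation by `height e`. -/
def toWreath : FreeGroup ι →* RegularWreathProduct A (Multiplicative J) :=
  FreeGroup.lift fun i => ⟨fun j => a i j.toAdd, Multiplicative.ofAdd (-e i)⟩

/-- The product of the labels along the path in `J` that spells `x` and starts at `j`, where the
`i`-th generator moves by `e i` and its step from `j` to `j + e i` is labelled `a i j`. -/
def holonomy : A :=
  (toWreath e a x).left (Multiplicative.ofAdd j)

@[simp] theorem holonomy_of (i : ι) : holonomy e a (.of i) j = a i j := by
  simp [holonomy, toWreath]

@[simp] theorem holonomy_one : holonomy e a 1 j = 1 := by simp [holonomy]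

theorem toWreath_right : (toWreath e a x).right = Multiplicative.ofAdd (-height e x) := by
  have h : RegularWreathProduct.rightHom.comp (toWreath e a) = (heightHom e)⁻¹ := by
    ext
    simp [toWreath, heightHom]
  exact DFunLike.congr_fun h x

theorem holonomy_mul :
    holonomy e a (x * y) j = holonomy e a x j * holonomy e a y (j + height e x) := by
  simp [holonomy, toWreath_right, add_comm j, ofAdd_add, ofAdd_neg]

theorem holonomy_inv : holonomy e a x⁻¹ j = (holonomy e a x (j - height e x))⁻¹ := by
  rw [eq_inv_iff_mul_eq_one, ← holonomy_one e a j, ← inv_mul_cancel x, holonomy_mul, height_inv,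
    sub_eq_add_neg]

variable {e x} in
theorem holonomy_pow_of_height_eq_zero (h : height e x = 0) (n : ℕ) :
    holonomy e a (x ^ n) j = holonomy e a x j ^ n := by
  induction n with
  | zero => simp
  | succ n ih => simp [pow_succ, holonomy_mul, ih, h]

theorem holonomy_map (f : A →* B) :
    holonomy e (fun i j => f (a i j)) x j = f (holonomy e a x j) := by
  induction x generalizing j with
  | C1 => simp
  | of i => simp
  | inv_of i _ => simp [holonomy_inv]
  | mul x y hx hy => simp [holonomy_mul, hx, hy]

theorem holonomy_mul_labels {A : Type*} [CommGroup A] (a b : ι → J → A) :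
    holonomy e (a * b) x j = holonomy e a x j * holonomy e b x j := by
  induction x generalizing j with
  | C1 => simp
  | of i => simp
  | inv_of i _ => simp [holonomy_inv, mul_comm]
  | mul x y hx hy => simp only [holonomy_mul, hx, hy, mul_mul_mul_comm]

variable {a} in
theorem periodic_holonomy {c : J} (ha : ∀ i, Function.Periodic (a i) c) :
    Function.Periodic (holonomy e a x) c := by
  intro j
  induction x generalizing j with
  | C1 => simp
  | of i => simpa using ha i j
  | inv_of i _ => simp [holonomy_inv, add_sub_right_comm, ha i _]
  | mul x y hx hy => simp [holonomy_mul, add_right_comm _ c, hx, hy]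

/-- Along `x`, the labels `a` have the holonomy of the pure gauge labels
`(g j)⁻¹ * g (j + e i)`. -/
def IsPureGauge (g : J → A) : Prop :=
  ∀ j, holonomy e a x j = (g j)⁻¹ * g (j + height e x)

namespace IsPureGauge

variable {e a x} {g : J → A}

theorem holonomy_eq_one (h : IsPureGauge e a x g) (hx : height e x = 0) :
    holonomy e a x j = 1 := by
  rw [h, hx, add_zero, inv_mul_cancel]

theorem mul {y : FreeGroup ι} (hx : IsPureGauge e a x g) (hy : IsPureGauge e a y g) :
    IsPureGauge e a (x * y) g := fun j => by
  rw [holonomy_mul, hx, hy, mul_assoc, mul_inv_cancel_left, height_mul, add_assoc]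

theorem inv (h : IsPureGauge e a x g) : IsPureGauge e a x⁻¹ g := fun j => by
  rw [holonomy_inv, h, sub_add_cancel, mul_inv_rev, inv_inv, height_inv, sub_eq_add_neg]

theorem zpow (h : IsPureGauge e a x g) (k : ℤ) : IsPureGauge e a (x ^ k) g := by
  induction k with
  | zero => intro j; simp
  | succ k ih => rw [zpow_add_one]; exact ih.mul h
  | pred k ih => rw [zpow_sub_one]; exact ih.mul h.inv

end IsPureGauge

theorem exists_finset_holonomy_congr (A : Type*) [Group A] :
    ∃ S : Finset J, ∀ (a b : ι → J → A) (j : J),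
      (∀ i, ∀ s ∈ S, a i (j + s) = b i (j + s)) → holonomy e a x j = holonomy e b x j := by
  classical
  induction x with
  | C1 => exact ⟨∅, by simp⟩
  | of i => exact ⟨{0}, fun a b j h => by simpa using h i⟩
  | inv_of i _ => exact ⟨{-e i}, fun a b j h => by simpa [holonomy_inv, sub_eq_add_neg] using h i⟩
  | mul x y hx hy =>
    obtain ⟨S, hS⟩ := hx
    obtain ⟨T, hT⟩ := hy
    refine ⟨S ∪ T.image (height e x + ·), fun a b j h => ?_⟩
    rw [holonomy_mul, holonomy_mul, hS a b j fun i s hs => h i s (Finset.mem_union_left _ hs),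
      hT a b _ fun i t ht => ?_]
    rw [add_assoc]
    exact h i _ (Finset.mem_union_right _ (Finset.mem_image_of_mem _ ht))

theorem holonomy_gauge (g : J → A) :
    holonomy e (fun i j => (g j)⁻¹ * a i j * g (j + e i)) x j =
      (g j)⁻¹ * holonomy e a x j * g (j + height e x) := by
  induction x generalizing j with
  | C1 => simp
  | of i => simp
  | inv_of i _ => simp [holonomy_inv, mul_assoc, sub_eq_add_neg]
  | mul x y hx hy =>
    rw [holonomy_mul, holonomy_mul, hx, hy, height_mul, add_assoc]
    group

theorem holonomy_eq_one_of_mem_normalClosure {R : Set (FreeGroup ι)}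
    (hR : ∀ r ∈ R, height e r = 0 ∧ ∀ j, holonomy e a r j = 1) (hx : x ∈ Subgroup.normalClosure R) :
    height e x = 0 ∧ ∀ j, holonomy e a x j = 1 := by
  have hker (r : FreeGroup ι) :
      r ∈ (toWreath e a).ker ↔ height e r = 0 ∧ ∀ j, holonomy e a r j = 1 := by
    rw [MonoidHom.mem_ker, RegularWreathProduct.ext_iff, and_comm, toWreath_right, funext_iff]
    simp [holonomy]
  exact (hker x).1 (Subgroup.normalClosure_le_normal (fun r hr => (hker r).2 (hR r hr)) hx)

/-- The words whose path in `J` closes up modulo `c`. -/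
def loopSubgroup (c : J) : Subgroup (FreeGroup ι) :=
  (AddSubgroup.toSubgroup (AddSubgroup.zmultiples c)).comap (heightHom e)

theorem mem_loopSubgroup {c : J} : x ∈ loopSubgroup e c ↔ ∃ m : ℤ, m • c = height e x :=
  Iff.rfl

instance {c : J} [(AddSubgroup.zmultiples c).FiniteIndex] : (loopSubgroup e c).FiniteIndex := by
  have hc := (AddSubgroup.finiteIndex_toSubgroup_iff (AddSubgroup.zmultiples c)).2 inferInstance
  constructor
  rw [loopSubgroup, Subgroup.index_comap]
  exact (Subgroup.isFiniteRelIndex_of_finiteIndex (h := hc)).relIndex_ne_zero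

variable {a} in
/-- The homomorphism that a `c`-periodic labelling, seen as a labelling of `J` modulo `c`, induces
on loops based at `0`. -/
def loopHolonomy {c : J} (ha : ∀ i, Function.Periodic (a i) c) : loopSubgroup e c →* A :=
  MonoidHom.mk' (fun x => holonomy e a x 0) fun x y => by
    obtain ⟨m, hm⟩ := (mem_loopSubgroup e x.1).1 x.2
    rw [Subgroup.coe_mul, holonomy_mul, ← hm, ((periodic_holonomy e y.1 ha).zsmul m) 0]

variable {e a} in
theorem isLarge_of_loopHolonomy_surjective {G : Type*} [Group G] (hA : IsLarge A)
    {π : FreeGroup ι →* G} (hπ : Function.Surjective π) {R : Set (FreeGroup ι)}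
    (hker : π.ker = Subgroup.normalClosure R) {c : J} [(AddSubgroup.zmultiples c).FiniteIndex]
    (ha : ∀ i, Function.Periodic (a i) c) (hs : Function.Surjective (loopHolonomy e ha))
    (hR : ∀ r ∈ R, height e r = 0 ∧ ∀ j, holonomy e a r j = 1) : IsLarge G := by
  refine hA.of_finiteIndex_of_le_ker hπ (loopSubgroup e c) hs fun x hx => ?_
  have hx' : x.1 ∈ Subgroup.normalClosure R := hker ▸ congrArg Subtype.val hx
  exact (holonomy_eq_one_of_mem_normalClosure e a x.1 hR hx').2 0

/-- The labelling `a` with every step corrected by the increment of `g`. -/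
def twist (g : J → A) (a : ι → J → A) (i : ι) (j : J) : A :=
  a i j * (g j)⁻¹ * g (j + e i)

variable {a} in
theorem periodic_twist {g : J → A} {c : J} {t : A} (hg : ∀ j, g (j + c) = t * g j)
    (ha : ∀ i, Function.Periodic (a i) c) (i : ι) : Function.Periodic (twist e g a i) c := by
  intro j
  simp [twist, ha i j, add_right_comm j c, hg, mul_assoc]

theorem exists_finset_holonomy_twist (A : Type*) [Group A] :
    ∃ S : Finset J, ∀ (g : J → A) (a : ι → J → A) (j : J),
      (∀ i, ∀ s ∈ S, a i (j + s) = 1 ∨ g (j + s) = g j) →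
        holonomy e (twist e g a) x j = holonomy e a x j * (g j)⁻¹ * g (j + height e x) := by
  obtain ⟨S, hS⟩ := exists_finset_holonomy_congr e x A
  refine ⟨S, fun g a j h => ?_⟩
  -- Up to gauge `twist e g a` is the conjugate of `a` by `g`, and near `j` only `g j` is relevant.
  let a' (i : ι) (k : J) : A := g k * a i k * (g k)⁻¹
  have hgauge : twist e g a = fun i k => (g k)⁻¹ * a' i k * g (k + e i) := by
    ext i k
    simp [twist, a', mul_assoc]
  have hconj : holonomy e a' x j = g j * holonomy e a x j * (g j)⁻¹ := by
    rw [← MulAut.conj_apply, ← MulEquiv.coe_toMonoidHom, ← holonomy_map]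
    refine hS _ _ j fun i s hs => ?_
    obtain h1 | h1 := h i s hs <;> simp [a', h1]
  rw [hgauge, holonomy_gauge, hconj]
  group

/-- The power of `t` that counts the multiples of `n` in the interval `(0, j]`, and for `j < 0`
negatively those in `(j, 0]`. -/
def floorPow (t : A) (n : ℕ) (j : ℤ) : A :=
  t ^ (j / n)

theorem floorPow_add_self (t : A) {n : ℕ} (hn : 0 < n) (j : ℤ) :
    floorPow t n (j + n) = t * floorPow t n j := by
  rw [floorPow, Int.add_ediv_of_dvd_right dvd_rfl, Int.ediv_self (by positivity), add_comm,
    zpow_one_add, floorPow]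

theorem exists_near_mul_of_ediv_ne {n : ℕ} {j s : ℤ} (h : (j + s) / n ≠ j / n) :
    ∃ m : ℤ, |j + s - m * n| ≤ |s| := by
  have hn : (0 : ℤ) < n := by
    rw [Int.natCast_pos, Nat.pos_iff_ne_zero]
    rintro rfl
    simp at h
  have hj := Int.emod_add_ediv_mul j n
  have hjs := Int.emod_add_ediv_mul (j + s) n
  have hj0 := Int.emod_nonneg j hn.ne'
  have hjs0 := Int.emod_nonneg (j + s) hn.ne'
  rcases h.lt_or_gt with h | h
  · have := Int.mul_le_mul_of_nonneg_right h hn.le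
    have := Int.emod_lt_of_pos (j + s) hn
    refine ⟨j / n, ?_⟩
    rw [abs_of_nonpos, abs_of_nonpos] <;> linarith
  · have := Int.mul_le_mul_of_nonneg_right h hn.le
    have := Int.emod_lt_of_pos j hn
    refine ⟨(j + s) / n, ?_⟩
    rw [abs_of_nonneg, abs_of_nonneg] <;> linarith

theorem eventually_holonomy_twist_floorPow (e : ι → ℤ) (t : A) :
    ∀ᶠ N : ℕ in Filter.atTop, ∀ (n : ℕ) (a : ι → ℤ → A),
      (∀ i (m l : ℤ), |l| ≤ N → a i (m * n + l) = 1) → ∀ j,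
        holonomy e (twist e (floorPow t n) a) x j =
          holonomy e a x j * (floorPow t n j)⁻¹ * floorPow t n (j + height e x) := by
  obtain ⟨S, hS⟩ := exists_finset_holonomy_twist e x A
  filter_upwards [Filter.eventually_ge_atTop (S.sup Int.natAbs)] with N hN n a ha j
  refine hS _ a j fun i s hs => ?_
  rw [or_iff_not_imp_right]
  intro hne
  obtain ⟨m, hm⟩ := exists_near_mul_of_ediv_ne (mt (congrArg (t ^ ·)) hne)
  have hs' : |s| ≤ N := by
    rw [Int.abs_eq_natAbs]
    exact_mod_cast (Finset.le_sup hs).trans hN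
  simpa using ha i m _ (hm.trans hs')

end Holonomy

section Surjectivity

variable {ι A : Type*} [Group A] {e : ι → ℤ} {a : ι → ℤ → A} {t : A} {n : ℕ} {u : FreeGroup ι}

theorem mem_range_loopHolonomy_of_isPureGauge (hn : 0 < n) (ha : ∀ i, Function.Periodic (a i) n)
    (hu : height e u = 1) (hug : IsPureGauge e a u (floorPow t n)) :
    t ∈ (loopHolonomy e ha).range := by
  refine ⟨⟨u ^ (n : ℤ), (mem_loopSubgroup e _).2 ⟨1, by simp [hu]⟩⟩, (hug.zpow n 0).trans ?_⟩
  have h0 : floorPow t n 0 = 1 := by simp [floorPow]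
  rw [height_zpow, hu, smul_eq_mul, mul_one, floorPow_add_self t hn, h0, inv_one, one_mul, mul_one]

theorem apply_mem_range_loopHolonomy_twist (hn : 0 < n)
    (ha : ∀ i, Function.Periodic (twist e (floorPow t n) a i) n) (hu : height e u = 1)
    (hug : IsPureGauge e (twist e (floorPow t n) a) u (floorPow t n)) (i : ι) (j : ℤ) :
    a i j ∈ (loopHolonomy e ha).range := by
  have hg : floorPow t n j ∈ (loopHolonomy e ha).range :=
    zpow_mem (mem_range_loopHolonomy_of_isPureGauge hn ha hu hug) _
  have hconj : floorPow t n j * a i j * (floorPow t n j)⁻¹ ∈ (loopHolonomy e ha).range := by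
    -- Climb to height `j` along `u`, take the step `i` there, and descend along `u`.
    let x := u ^ j * .of i * u ^ (-(j + e i))
    have hx : height e x = 0 := by simp [x, hu]
    refine ⟨⟨x, (mem_loopSubgroup e x).2 ⟨0, by simp [hx]⟩⟩, ?_⟩
    change holonomy e _ x 0 = _
    simp only [x, holonomy_mul, holonomy_of, hug.zpow _ _]
    simp [twist, floorPow, hu, mul_assoc]
  simpa [mul_assoc] using mul_mem (mul_mem (inv_mem hg) hconj) hg

end Surjectivity

section PeriodicLabelling

variable {ι C : Type*} [Fintype ι] [CommGroup C] [Finite C] [Nontrivial C]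

theorem exists_periodic_labelling_of_card_lt (e : ι → ℤ) {κ : Type*} [Fintype κ]
    (R : κ → FreeGroup ι) {n N : ℕ} [NeZero n]
    (h : Fintype.card κ * n + Fintype.card ι * (2 * N + 1) < Fintype.card ι * n) :
    ∃ b : ι → ℤ → C,
      (∀ i, Function.Periodic (b i) n) ∧
      (∀ i (m l : ℤ), |l| ≤ N → b i (m * n + l) = 1) ∧
      (∀ k j, holonomy e b (R k) j = 1) ∧
      ∃ i j, b i j ≠ 1 := by
  let label (f : ι × ZMod n → C) (i : ι) (j : ℤ) : C := f (i, j)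
  have hper (f i) : Function.Periodic (label f i) n := fun j => by simp [label]
  let constraints : (ι × ZMod n → C) →*
      (κ × ZMod n → C) × (ι × Finset.Icc (-N : ℤ) N → C) :=
    MonoidHom.mk' (fun f => (fun z => holonomy e (label f) (R z.1) z.2.val,
      fun z => label f z.1 z.2)) fun f g =>
        Prod.ext (funext fun z => holonomy_mul_labels e (R z.1) _ (label f) (label g)) rfl
  obtain ⟨f, hf, hf1⟩ := exists_ne_one_map_eq_one_of_card_lt constraints <| by
    have hIcc : (N + 1 + N : ℤ).toNat = 2 * N + 1 := by omega
    simpa only [Nat.card_prod, Nat.card_fun, Nat.card_zmod, Nat.card_eq_fintype_card (α := ι),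
      Nat.card_eq_fintype_card (α := κ), Nat.card_eq_fintype_card (α := Finset.Icc _ _),
      Fintype.card_coe, Int.card_Icc, sub_neg_eq_add, hIcc, ← pow_add] using
      Nat.pow_lt_pow_right Finite.one_lt_card h
  refine ⟨label f, hper f, fun i m l hl => ?_, fun k j => ?_, ?_⟩
  · rw [add_comm, show label f i (l + m * n) = label f i l by simpa using (hper f i).int_mul m l]
    exact congrFun (congrArg Prod.snd hf1) (i, ⟨l, Finset.mem_Icc.2 (abs_le.1 hl)⟩)
  · have hj : holonomy e (label f) (R k) j = holonomy e (label f) (R k) (j : ZMod n).val := by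
      rw [ZMod.val_intCast, Int.emod_def, mul_comm]
      simpa using ((periodic_holonomy e (R k) (hper f)).sub_int_mul_eq (j / n)).symm
    rw [hj]
    exact congrFun (congrArg Prod.fst hf1) (k, (j : ZMod n))
  · obtain ⟨⟨i, z⟩, hz⟩ := Function.ne_iff.1 hf
    exact ⟨i, z.val, by simpa [label] using hz⟩

theorem exists_periodic_labelling (e : ι → ℤ) {κ : Type*} [Fintype κ] (R : κ → FreeGroup ι)
    (hκ : Fintype.card κ < Fintype.card ι) (N : ℕ) :
    ∃ n : ℕ, 0 < n ∧ ∃ b : ι → ℤ → C,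
      (∀ i, Function.Periodic (b i) n) ∧
      (∀ i (m l : ℤ), |l| ≤ N → b i (m * n + l) = 1) ∧
      (∀ k j, holonomy e b (R k) j = 1) ∧
      ∃ i j, b i j ≠ 1 := by
  let n := Fintype.card ι * (2 * N + 1) + 1
  have : NeZero n := ⟨Nat.succ_ne_zero _⟩
  refine ⟨n, Nat.succ_pos _, exists_periodic_labelling_of_card_lt e R ?_⟩
  calc Fintype.card κ * n + Fintype.card ι * (2 * N + 1)
    _ < (Fintype.card κ + 1) * n := by
      rw [add_one_mul]
      exact Nat.add_lt_add_left (Nat.lt_succ_self _) _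
    _ ≤ Fintype.card ι * n := Nat.mul_le_mul_right n hκ

theorem exists_periodic_labelling_of_pow_mem {R : Finset (FreeGroup ι)}
    (hR : R.card < Fintype.card ι) {w : FreeGroup ι} {q : ℕ} (hw : w ^ q ∈ R) {e : ι → ℤ}
    (hwe : height e w = 0) (u : FreeGroup ι) (hC : Nat.card C ∣ q) (N : ℕ) :
    ∃ n : ℕ, 0 < n ∧ ∃ b : ι → ℤ → C,
      (∀ i, Function.Periodic (b i) n) ∧
      (∀ i (m l : ℤ), |l| ≤ N → b i (m * n + l) = 1) ∧
      (∀ x ∈ (insert u R : Set (FreeGroup ι)), ∀ j, holonomy e b x j = 1) ∧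
      ∃ i j, b i j ≠ 1 := by
  classical
  let R' : R → FreeGroup ι := Function.update Subtype.val ⟨w ^ q, hw⟩ u
  obtain ⟨n, hn, b, hb, hbN, hbR, hb1⟩ := exists_periodic_labelling (C := C) e R' (by simpa) N
  refine ⟨n, hn, b, hb, hbN, ?_, hb1⟩
  rintro x (rfl | hx) j
  · simpa [R'] using hbR ⟨w ^ q, hw⟩ j
  · obtain rfl | hxw := eq_or_ne x (w ^ q)
    · rw [holonomy_pow_of_height_eq_zero b j hwe, ← orderOf_dvd_iff_pow_eq_one]
      exact (orderOf_dvd_natCard _).trans hC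
    · simpa [R', hxw] using hbR ⟨x, hx⟩ j

end PeriodicLabelling

section IntFreeProdLabelling

variable {ι C : Type*} [Group C]

/-- The labels `b` in the factor `C` with the generator of `ℤ` inserted at every multiple of `n`. -/
def intFreeProdLabelling (e : ι → ℤ) (n : ℕ) (b : ι → ℤ → C) : ι → ℤ → IntFreeProd C :=
  twist e (floorPow (.inl (.of 1)) n) fun i j => .inr (b i j)

theorem periodic_intFreeProdLabelling (e : ι → ℤ) {n : ℕ} (hn : 0 < n) {b : ι → ℤ → C}
    (hb : ∀ i, Function.Periodic (b i) n) (i : ι) :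
    Function.Periodic (intFreeProdLabelling e n b i) n :=
  periodic_twist e (floorPow_add_self _ hn) (fun i j => by rw [hb i j]) i

theorem eventually_isPureGauge_intFreeProdLabelling (e : ι → ℤ) (C : Type*) [Group C]
    (W : Finset (FreeGroup ι)) :
    ∀ᶠ N : ℕ in Filter.atTop, ∀ (n : ℕ) (b : ι → ℤ → C),
      (∀ i (m l : ℤ), |l| ≤ N → b i (m * n + l) = 1) →
      (∀ x ∈ W, ∀ j, holonomy e b x j = 1) →
        ∀ x ∈ W, IsPureGauge e (intFreeProdLabelling e n b) x (floorPow (.inl (.of 1)) n) := by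
  have h (x) := eventually_holonomy_twist_floorPow x e (.inl (.of 1) : IntFreeProd C)
  filter_upwards [(Filter.eventually_all_finset W).2 fun x _ => h x] with N hN n b hb hbW x hx j
  rw [intFreeProdLabelling, hN x hx n _ (fun i m l hl => by rw [hb i m l hl, map_one]),
    holonomy_map, hbW x hx, map_one, one_mul]

theorem loopHolonomy_intFreeProdLabelling_surjective {e : ι → ℤ} {n : ℕ} (hn : 0 < n)
    {b : ι → ℤ → C} (hb : ∀ i, Function.Periodic (b i) n) {u : FreeGroup ι} (hu : height e u = 1)
    (hug : IsPureGauge e (intFreeProdLabelling e n b) u (floorPow (.inl (.of 1)) n))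
    {i : ι} {j : ℤ} (hij : Subgroup.zpowers (b i j) = ⊤) :
    Function.Surjective (loopHolonomy e (periodic_intFreeProdLabelling e hn hb)) := by
  have hper := periodic_intFreeProdLabelling e hn hb
  rw [← MonoidHom.range_eq_top]
  refine eq_top_of_range_inr_le_of_inl_of_one_mem
    (mem_range_loopHolonomy_of_isPureGauge hn hper hu hug) ?_
  rw [MonoidHom.range_eq_map, ← hij, MonoidHom.map_zpowers, Subgroup.zpowers_le]
  exact apply_mem_range_loopHolonomy_twist hn hper hu hug i j

end IntFreeProdLabelling

theorem stmt12_general {G α : Type*} [Group G] [Fintype α]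
    (π : FreeGroup α →* G) (hsurj : Function.Surjective π) (Rel : Finset (FreeGroup α))
    (hker : π.ker = Subgroup.normalClosure (Rel : Set (FreeGroup α)))
    (hlt : Rel.card < Fintype.card α)
    (hpow : ∃ ρ ∈ Rel, ∃ w : FreeGroup α, ∃ q : ℕ, 2 ≤ q ∧ ρ = w ^ q) : IsLarge G := by
  classical
  obtain ⟨_, hw, w, q, hq, rfl⟩ := hpow
  obtain ⟨p, hp, hpq⟩ := Nat.exists_prime_and_dvd (show q ≠ 1 by omega)
  have := Fact.mk hp
  let C := Multiplicative (ZMod p)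
  have hC : Nat.card C = p := by simp [C]
  obtain ⟨e, heR, u, hu⟩ := exists_height_eq_one_of_card_lt hlt
  have hwe : height e w = 0 := by simpa [show q ≠ 0 by omega] using heR _ hw
  obtain ⟨N, hN⟩ := (eventually_isPureGauge_intFreeProdLabelling e C (insert u Rel)).exists
  obtain ⟨n, hn, b, hb, hbN, hbW, i, j, hij⟩ :=
    exists_periodic_labelling_of_pow_mem hlt hw hwe u (C := C) (hC ▸ hpq) N
  have hgauge := hN n b hbN (by simpa using hbW)
  have hs := loopHolonomy_intFreeProdLabelling_surjective hn hb hu (hgauge u (by simp))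
    (zpowers_eq_top_of_prime_card hC hij)
  have : (AddSubgroup.zmultiples (n : ℤ)).FiniteIndex := ⟨by simpa using hn.ne'⟩
  exact isLarge_of_loopHolonomy_surjective (isLarge_intFreeProd C) hsurj hker _ hs
    fun r hr => ⟨heR r hr, fun k =>
      (hgauge r (Finset.mem_insert_of_mem hr)).holonomy_eq_one k (heR r hr)⟩

/-- **Corollary 1.4 (Baumslag–Pride conjecture; Gromov, Stöhr).** Let `G` be a group
having a finite presentation with one more generator than relations (here `π` is the
quotient map from the free group on the finite type `α` of generators, whose kernel is
the normal closure of the finite set `Rel` of relations, with `|α| = |Rel| + 1`), and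
suppose that one of the relations is a proper power `w^q` with `q ≥ 2`.  Then `G` has a
finite index subgroup that admits a surjective homomorphism onto a non-abelian free
group. -/
theorem stmt12 (G : Type*) [Group G]
    (α : Type) [Fintype α]
    (π : FreeGroup α →* G) (hsurj : Function.Surjective π)
    (Rel : Finset (FreeGroup α))
    (hker : π.ker = Subgroup.normalClosure (Rel : Set (FreeGroup α)))
    (hcard : Fintype.card α = Rel.card + 1)
    (hpow : ∃ ρ ∈ Rel, ∃ w : FreeGroup α, ∃ q : ℕ, 2 ≤ q ∧ ρ = w ^ q) :
    ∃ H : Subgroup G, H.FiniteIndex ∧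
      ∃ f : ↥H →* FreeGroup (Fin 2), Function.Surjective f :=
  stmt12_general π hsurj Rel hker (by omega) hpow
end

section
/- Let G be a finitely presented group. Then there is a constant k > 1 with the following property: if H is any finite index subgroup of G, then either the abelianisation H/[H,H] is infinite, or |H/[H,H]| ≤ k^{[G : H]}. -/
/-- `G` is a finitely presented group: it is the quotient of a finitely generated free
group by the normal closure of finitely many relations. -/
def IsFinitelyPresented (G : Type*) [Group G] : Prop :=
  ∃ (n : ℕ) (φ : FreeGroup (Fin n) →* G) (R : Finset (FreeGroup (Fin n))),
    Function.Surjective φ ∧ φ.ker = Subgroup.normalClosure (R : Set (FreeGroup (Fin n)))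

/-!
Write `G = F / ⟨⟨R⟩⟩` with `F` free on `α`, and let `H` have finite index in `G`. The words of `F`
label paths in the Schreier graph of `G ⧸ H`, and counting edges with sign turns such a path into a
vector of `ℤ ^ (α × G ⧸ H)`. Modulo the set `V` of vectors of the lifted relators, the count
descends to `G`, and on loops at the base point it gives a homomorphism from the abelianisation of
`H` to `ℤ ^ (α × G ⧸ H) ⧸ span V`. This is injective, because a path closed up by coset
representatives gives an element of the abelianisation that depends only on the edge count.

Every vector of `V` has `ℓ¹` norm at most the length `L` of the longest relator. The torsion of
`ℤ ^ (α × G ⧸ H) ⧸ span V` embeds into a finite quotient of the lattice by `V` and some unit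
vectors; the order of the latter is at most the absolute value of a nonzero determinant with rows of
`ℓ¹` norm at most `L`, hence at most `L ^ (|α| [G : H])`.
-/

section Lattice

variable {ι : Type*}

theorem abs_det_le_prod_sum_abs {R : Type*} [CommRing R] [LinearOrder R] [IsStrictOrderedRing R]
    [Fintype ι] [DecidableEq ι] (A : Matrix ι ι R) : |A.det| ≤ ∏ i, ∑ j, |A i j| := by
  calc |A.det| = |∑ σ : Equiv.Perm ι, (σ.sign : R) * ∏ i, A i (σ i)| := by
        rw [← A.det_transpose, Matrix.det_apply']; rfl
    _ ≤ ∑ σ : Equiv.Perm ι, |(σ.sign : R) * ∏ i, A i (σ i)| := Finset.abs_sum_le_sum_abs _ _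
    _ = ∑ σ : Equiv.Perm ι, ∏ i, |A i (σ i)| := by
        refine Finset.sum_congr rfl fun σ _ => ?_
        rw [abs_mul, Finset.abs_prod]
        rcases Int.units_eq_one_or σ.sign with h | h <;> simp [h]
    _ = ∑ f ∈ Finset.univ.map ⟨_, DFunLike.coe_injective (F := Equiv.Perm ι)⟩, ∏ i, |A i (f i)| :=
        (Finset.sum_map _ ⟨_, DFunLike.coe_injective (F := Equiv.Perm ι)⟩
          fun f => ∏ i, |A i (f i)|).symm
    _ ≤ ∑ f : ι → ι, ∏ i, |A i (f i)| :=
        Finset.sum_le_sum_of_subset_of_nonneg (Finset.subset_univ _)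
          fun f _ _ => Finset.prod_nonneg fun i _ => abs_nonneg _
    _ = ∏ i, ∑ j, |A i j| := by rw [Finset.prod_univ_sum, Fintype.piFinset_univ]

theorem sum_abs_single {A : Type*} [AddCommGroup A] [LinearOrder A] [IsOrderedAddMonoid A]
    [Fintype ι] [DecidableEq ι] (i : ι) (x : A) : ∑ j, |(Pi.single i x : ι → A) j| = |x| := by
  rw [Finset.sum_eq_single i] <;> simp +contextual

theorem exists_linearIndepOn_finite_quotient_span {M : Type*} [AddCommGroup M] [Module.Finite ℤ M]
    (v : ι → M) [Finite (M ⧸ Submodule.span ℤ (Set.range v))] :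
    ∃ J : Set ι, LinearIndepOn ℤ v J ∧ Finite (M ⧸ Submodule.span ℤ (v '' J)) := by
  obtain ⟨J, hJ, hmax⟩ := exists_maximal_linearIndepOn ℤ v
  refine ⟨J, hJ, Module.finite_of_fg_torsion _ fun x => ?_⟩
  have hspan : Submodule.span ℤ (Set.range v) ≤
      (Submodule.torsion ℤ (M ⧸ Submodule.span ℤ (v '' J))).comap (Submodule.mkQ _) := by
    rw [Submodule.span_le]
    rintro _ ⟨i, rfl⟩
    obtain ⟨a, ha, hai⟩ : ∃ a : ℤ, a ≠ 0 ∧ a • v i ∈ Submodule.span ℤ (v '' J) := by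
      by_cases hi : i ∈ J
      · exact ⟨1, one_ne_zero, by simpa using Submodule.subset_span (Set.mem_image_of_mem v hi)⟩
      · exact hmax i hi
    exact ⟨⟨a, mem_nonZeroDivisors_of_ne_zero ha⟩, (Submodule.Quotient.mk_eq_zero _).2 hai⟩
  obtain ⟨y, rfl⟩ := Submodule.mkQ_surjective _ x
  let n := Nat.card (M ⧸ Submodule.span ℤ (Set.range v))
  have hn : (n : ℤ) ≠ 0 := by exact_mod_cast Nat.card_pos.ne'
  have hy : n • y ∈ Submodule.span ℤ (Set.range v) := by
    rw [← Submodule.Quotient.mk_eq_zero, Submodule.Quotient.mk_smul, card_nsmul_eq_zero']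
  obtain ⟨a, ha⟩ := hspan hy
  refine ⟨a * ⟨n, mem_nonZeroDivisors_of_ne_zero hn⟩, ?_⟩
  rw [mul_smul]
  simpa [Submonoid.smul_def] using ha

theorem card_quotient_span_range_eq_natAbs_det [Fintype ι] [DecidableEq ι] (P : Matrix ι ι ℤ)
    (hP : LinearIndependent ℤ P.row) :
    Nat.card ((ι → ℤ) ⧸ Submodule.span ℤ (Set.range P.row)) = P.det.natAbs := by
  rw [← Submodule.natAbs_det_basis_change (Pi.basisFun ℤ ι) _ (Module.Basis.span hP),
    Pi.basisFun_det_apply]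
  congr 2
  ext i j
  simp [Module.Basis.span_apply]

theorem exists_matrix_linearIndependent_of_finite_quotient_span [Finite ι] (V : Set (ι → ℤ))
    [hV : Finite ((ι → ℤ) ⧸ Submodule.span ℤ V)] :
    ∃ P : Matrix ι ι ℤ, (∀ i, P i ∈ V) ∧ LinearIndependent ℤ P.row := by
  rw [← Subtype.range_coe (s := V)] at hV
  obtain ⟨J, hJ, hfin⟩ := exists_linearIndepOn_finite_quotient_span ((↑) : V → ι → ℤ)
  have hrank := (Submodule.finiteQuotient_iff _).1 hfin
  rw [Set.image_eq_range] at hrank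
  let b := Module.Basis.span hJ
  have := Module.Finite.finite_basis b
  have hcard : Nat.card ι = Nat.card J := by
    rw [← Module.finrank_eq_nat_card_basis b, hrank,
      Module.finrank_eq_nat_card_basis (Pi.basisFun ℤ ι)]
  obtain ⟨e⟩ : Nonempty (ι ≃ J) := Finite.card_eq.1 hcard
  exact ⟨fun i => (e i : V), fun i => (e i : V).2, hJ.comp e e.injective⟩

theorem card_quotient_span_le_pow [Fintype ι] (V : Set (ι → ℤ)) (L : ℕ)
    (hV : ∀ v ∈ V, ∑ i, |v i| ≤ L) [Finite ((ι → ℤ) ⧸ Submodule.span ℤ V)] :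
    Nat.card ((ι → ℤ) ⧸ Submodule.span ℤ V) ≤ L ^ Fintype.card ι := by
  classical
  obtain ⟨P, hPV, hP⟩ := exists_matrix_linearIndependent_of_finite_quotient_span V
  have hle : Submodule.span ℤ (Set.range P.row) ≤ Submodule.span ℤ V :=
    Submodule.span_mono (Set.range_subset_iff.2 hPV)
  have hindex := card_quotient_span_range_eq_natAbs_det P hP
  have hdet : P.det ≠ 0 := fun h => by
    obtain ⟨v, hv, hvP⟩ := Matrix.exists_vecMul_eq_zero_iff.2 h
    exact hv (Matrix.vecMul_injective_iff.2 hP (hvP.trans (Matrix.zero_vecMul P).symm))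
  have : Finite ((ι → ℤ) ⧸ Submodule.span ℤ (Set.range P.row)) :=
    Nat.finite_of_card_ne_zero (by rwa [hindex, Int.natAbs_ne_zero])
  calc Nat.card ((ι → ℤ) ⧸ Submodule.span ℤ V)
      ≤ Nat.card ((ι → ℤ) ⧸ Submodule.span ℤ (Set.range P.row)) :=
        Nat.card_le_card_of_surjective _ (Submodule.factor_surjective hle)
    _ = P.det.natAbs := hindex
    _ ≤ L ^ Fintype.card ι := by
        zify
        calc |P.det| ≤ ∏ i, ∑ j, |P i j| := abs_det_le_prod_sum_abs P
          _ ≤ ∏ _i : ι, (L : ℤ) := Finset.prod_le_prod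
              (fun i _ => Finset.sum_nonneg fun j _ => abs_nonneg _) fun i _ => hV _ (hPV i)
          _ = (L : ℤ) ^ Fintype.card ι := by simp

theorem disjoint_torsion_of_isTorsionFree {M : Type*} [AddCommGroup M] (S : Submodule ℤ M)
    [Module.IsTorsionFree ℤ S] : Disjoint (AddCommGroup.torsion M) S.toAddSubgroup := by
  rw [AddSubgroup.disjoint_def]
  intro x hx hxS
  obtain ⟨n, hn, hnx⟩ := isOfFinAddOrder_iff_zsmul_eq_zero.1 hx
  have hnx' : n • (⟨x, hxS⟩ : S) = 0 := Subtype.ext hnx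
  exact congrArg Subtype.val ((smul_eq_zero_iff_right hn).1 hnx')

theorem card_torsion_le_card_quotient {M : Type*} [AddCommGroup M] (S : Submodule ℤ M)
    [Module.IsTorsionFree ℤ S] [Finite (M ⧸ S)] :
    Nat.card (AddCommGroup.torsion M) ≤ Nat.card (M ⧸ S) := by
  refine Nat.card_le_card_of_injective (fun x => S.mkQ (x : M)) fun x y hxy => ?_
  have hsub : (x - y : M) ∈ S := (Submodule.Quotient.eq _).1 hxy
  exact Subtype.ext <| sub_eq_zero.1 <|
    AddSubgroup.disjoint_def.1 (disjoint_torsion_of_isTorsionFree S) (sub_mem x.2 y.2) hsub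

theorem card_torsion_quotient_span_le_pow [Fintype ι] (V : Set (ι → ℤ)) (L : ℕ) (hL : 1 ≤ L)
    (hV : ∀ v ∈ V, ∑ i, |v i| ≤ L) :
    Nat.card (AddCommGroup.torsion ((ι → ℤ) ⧸ Submodule.span ℤ V)) ≤ L ^ Fintype.card ι := by
  classical
  let e := Pi.basisFun ℤ ι
  let q := (Submodule.span ℤ V).mkQ
  have hspan : Submodule.span ℤ (Set.range (q ∘ e)) = ⊤ := by
    rw [Set.range_comp, Submodule.span_image, e.span_eq, Submodule.map_top, Submodule.range_mkQ]
  have := Submodule.Quotient.subsingleton_iff.2 hspan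
  obtain ⟨J, hJ, hfin⟩ := exists_linearIndepOn_finite_quotient_span (q ∘ e)
  let S := Submodule.span ℤ ((q ∘ e) '' J)
  have hfree : Module.Free ℤ S := by
    have := Module.Free.of_basis (Module.Basis.span hJ)
    rwa [← Set.image_eq_range] at this
  have hS : S = (Submodule.span ℤ (e '' J)).map q := by
    rw [← Submodule.span_image, ← Set.image_comp]
  let E : (((ι → ℤ) ⧸ Submodule.span ℤ V) ⧸ S) ≃ₗ[ℤ] (ι → ℤ) ⧸ Submodule.span ℤ (V ∪ e '' J) :=
    Submodule.quotEquivOfEq _ _ hS ≪≫ₗ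
      Submodule.quotientQuotientEquivQuotientSup _ (Submodule.span ℤ (e '' J)) ≪≫ₗ
      Submodule.quotEquivOfEq _ _ (Submodule.span_union _ _).symm
  have : Finite ((ι → ℤ) ⧸ Submodule.span ℤ (V ∪ e '' J)) := Finite.of_equiv _ E.toEquiv
  calc Nat.card (AddCommGroup.torsion ((ι → ℤ) ⧸ Submodule.span ℤ V))
      ≤ Nat.card (((ι → ℤ) ⧸ Submodule.span ℤ V) ⧸ S) := card_torsion_le_card_quotient S
    _ = Nat.card ((ι → ℤ) ⧸ Submodule.span ℤ (V ∪ e '' J)) := Nat.card_congr E.toEquiv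
    _ ≤ L ^ Fintype.card ι := by
        refine card_quotient_span_le_pow _ L ?_
        rintro _ (hv | ⟨i, -, rfl⟩)
        · exact hV _ hv
        · rw [Pi.basisFun_apply, sum_abs_single, abs_one]
          exact_mod_cast hL

theorem finite_torsion_of_module_finite (M : Type*) [AddCommGroup M] [Module.Finite ℤ M] :
    Finite (AddCommGroup.torsion M) := by
  rw [← Submodule.torsion_int]
  exact Module.finite_of_fg_torsion (Submodule.torsion ℤ M) Submodule.torsion_isTorsion

end Lattice

/-- An additive `1`-cocycle with values in `M` for the permutation action `a`: a function on paths
`x ⟶ a w x` that is additive under concatenation. The action is from the left, so the path of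
`w * w'` starts with the path of `w'`. -/
def IsActionCocycle {F X M : Type*} [Group F] [AddCommGroup M] (a : F →* Equiv.Perm X)
    (c : F → X → M) : Prop :=
  ∀ w w' x, c (w * w') x = c w (a w' x) + c w' x

namespace IsActionCocycle

variable {F G X M N : Type*} [Group F] [Group G] [AddCommGroup M] [AddCommGroup N]
  {a : F →* Equiv.Perm X} {c : F → X → M}

theorem apply_one (hc : IsActionCocycle a c) (x : X) : c 1 x = 0 := by
  simpa using hc 1 1 x

theorem apply_inv (hc : IsActionCocycle a c) (w : F) (x : X) : c w⁻¹ x = -c w (a w⁻¹ x) := by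
  have h := hc w w⁻¹ x
  rw [mul_inv_cancel, hc.apply_one] at h
  exact (neg_eq_of_add_eq_zero_right h.symm).symm

theorem map (hc : IsActionCocycle a c) (f : M →+ N) : IsActionCocycle a fun w x => f (c w x) :=
  fun w w' x => by simp only [hc w w' x, map_add]

theorem comp {b : G →* Equiv.Perm X} {d : G → X → M} (hd : IsActionCocycle b d) (φ : F →* G) :
    IsActionCocycle (b.comp φ) fun w => d (φ w) :=
  fun w w' x => by simp only [map_mul, hd (φ w) (φ w') x, MonoidHom.comp_apply]

theorem eq_zero_of_mem_normalClosure (hc : IsActionCocycle a c) {R : Set F} (hRa : R ⊆ a.ker)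
    (hR : ∀ r ∈ R, ∀ x, c r x = 0) {w : F} (hw : w ∈ Subgroup.normalClosure R) (x : X) :
    c w x = 0 := by
  induction hw using Subgroup.closure_induction generalizing x with
  | mem w hw =>
    obtain ⟨r, hr, hconj⟩ := Group.mem_conjugatesOfSet_iff.1 hw
    obtain ⟨g, rfl⟩ := isConj_iff.1 hconj
    have hfix : a r (a g⁻¹ x) = a g⁻¹ x := by
      rw [MonoidHom.mem_ker.1 (hRa hr), Equiv.Perm.one_apply]
    rw [hc, hc, hfix, hR r hr, add_zero, ← hc, mul_inv_cancel, hc.apply_one]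
  | one => exact hc.apply_one x
  | mul v w _ _ hv hw => rw [hc, hv, hw, add_zero]
  | inv w _ hw => rw [hc.apply_inv, hw, neg_zero]

theorem exists_descend {b : G →* Equiv.Perm X} {φ : F →* G} (hφ : Function.Surjective φ)
    (hc : IsActionCocycle (b.comp φ) c) (hker : ∀ w ∈ φ.ker, ∀ x, c w x = 0) :
    ∃ d : G → X → M, IsActionCocycle b d ∧ ∀ w x, d (φ w) x = c w x := by
  have hfactor : c.FactorsThrough φ := fun w w' h => by
    have hmem : w'⁻¹ * w ∈ φ.ker := by rw [MonoidHom.mem_ker, map_mul, map_inv, h, inv_mul_cancel]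
    have hfix : ∀ x, b.comp φ (w'⁻¹ * w) x = x := fun x => by
      rw [MonoidHom.comp_apply, MonoidHom.mem_ker.1 hmem, map_one, Equiv.Perm.one_apply]
    ext x
    calc c w x = c (w' * (w'⁻¹ * w)) x := by rw [mul_inv_cancel_left]
      _ = c w' x := by rw [hc, hfix, hker _ hmem, add_zero]
  have hextend : ∀ w x, Function.extend φ c 0 (φ w) x = c w x := fun w x =>
    congrFun (hfactor.extend_apply 0 w) x
  refine ⟨Function.extend φ c 0, fun g g' x => ?_, hextend⟩
  obtain ⟨w, rfl⟩ := hφ g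
  obtain ⟨w', rfl⟩ := hφ g'
  rw [← map_mul, hextend, hextend, hextend, hc, MonoidHom.comp_apply]

/-- The homomorphism given by a cocycle on a subgroup `K` fixing the base point `x`, that is, on
loops at `x`. -/
def loopHom (hc : IsActionCocycle a c) (K : Subgroup F) (x : X) (hx : ∀ w ∈ K, a w x = x) :
    K →* Multiplicative M where
  toFun w := .ofAdd (c w x)
  map_one' := by rw [Subgroup.coe_one, hc.apply_one, ofAdd_zero]
  map_mul' w w' := by rw [Subgroup.coe_mul, hc, hx w' w'.2, ofAdd_add]

end IsActionCocycle

section FreeGroup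

variable {α X M : Type*} [AddCommGroup M] {a : FreeGroup α →* Equiv.Perm X}

theorem IsActionCocycle.ext_of_freeGroup {c d : FreeGroup α → X → M} (hc : IsActionCocycle a c)
    (hd : IsActionCocycle a d) (h : ∀ s x, c (.of s) x = d (.of s) x) : c = d := by
  ext w x
  induction w using FreeGroup.induction_on generalizing x with
  | C1 => rw [hc.apply_one, hd.apply_one]
  | of s => exact h s x
  | inv_of s _ => rw [hc.apply_inv, hd.apply_inv, h]
  | mul w w' hw hw' => rw [hc, hd, hw, hw']

-- A cocycle is the same as a lift of the action to the wreath product of `M` with `Perm X`, and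
-- homomorphisms out of a free group are determined freely on generators.
theorem exists_isActionCocycle_of_freeGroup (a : FreeGroup α →* Equiv.Perm X) (e : α → X → M) :
    ∃ c, IsActionCocycle a c ∧ ∀ s x, c (.of s) x = e s x := by
  let f : FreeGroup α →* (X → Multiplicative M) ⋊[mulAutArrow] Equiv.Perm X :=
    FreeGroup.lift fun s => ⟨fun x => .ofAdd (e s ((a (.of s))⁻¹ x)), a (.of s)⟩
  have hright : ∀ w, (f w).right = a w := by
    have : SemidirectProduct.rightHom.comp f = a := by
      ext1 s
      simp [f]
    exact DFunLike.congr_fun this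
  refine ⟨fun w x => ((f w).left (a w x)).toAdd, fun w w' x => ?_, fun s x => ?_⟩
  · have hcancel : (a w)⁻¹ (a (w * w') x) = a w' x := by simp
    have hmul : (f (w * w')).left (a (w * w') x) =
        (f w).left (a (w * w') x) * (f w').left ((a w)⁻¹ (a (w * w') x)) := by
      rw [map_mul, SemidirectProduct.mul_left, hright]
      rfl
    beta_reduce
    rw [hmul, hcancel, toAdd_mul, map_mul, Equiv.Perm.mul_apply]
  · simp [f]

theorem IsActionCocycle.sum_abs_le_norm {ι : Type*} [Fintype ι] [DecidableEq α]
    {c : FreeGroup α → X → ι → ℤ} (hc : IsActionCocycle a c)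
    (h : ∀ s x, ∑ i, |c (.of s) x i| ≤ 1) (w : FreeGroup α) (x : X) :
    ∑ i, |c w x i| ≤ w.norm := by
  have hletter : ∀ (p : α × Bool) x, ∑ i, |c (.mk [p]) x i| ≤ 1 := by
    rintro ⟨s, _ | _⟩ x
    · have hs : FreeGroup.mk [(s, false)] = (FreeGroup.of s)⁻¹ := rfl
      simpa only [hs, hc.apply_inv, Pi.neg_apply, abs_neg] using h s (a (.of s)⁻¹ x)
    · exact h s x
  have hword : ∀ (l : List (α × Bool)) x, ∑ i, |c (.mk l) x i| ≤ l.length := by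
    intro l x
    induction l with
    | nil => simp [← FreeGroup.one_eq_mk, hc.apply_one]
    | cons p l ih =>
      have hcons : FreeGroup.mk (p :: l) = .mk [p] * .mk l := by simp [FreeGroup.mul_mk]
      calc ∑ i, |c (.mk (p :: l)) x i|
          ≤ ∑ i, (|c (.mk [p]) (a (.mk l) x) i| + |c (.mk l) x i|) := by
            rw [hcons, hc]
            exact Finset.sum_le_sum fun i _ => abs_add_le _ _
        _ ≤ 1 + l.length := by
            rw [Finset.sum_add_distrib]
            exact add_le_add (hletter _ _) ih
        _ = (p :: l).length := by rw [List.length_cons, Nat.cast_succ, add_comm]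
  simpa only [FreeGroup.mk_toWord, FreeGroup.norm] using hword w.toWord x

variable [DecidableEq α] [DecidableEq X]

/-- The signed count of the edges of the Schreier graph of `a` that are traversed by the path
starting at `x` and labelled by `w`, where `(s, x)` stands for the edge from `x` to `a s x`. -/
noncomputable def edgeCount (a : FreeGroup α →* Equiv.Perm X) : FreeGroup α → X → α × X → ℤ :=
  (exists_isActionCocycle_of_freeGroup a fun s x => Pi.single (s, x) 1).choose

theorem isActionCocycle_edgeCount (a : FreeGroup α →* Equiv.Perm X) :
    IsActionCocycle a (edgeCount a) :=
  (exists_isActionCocycle_of_freeGroup a _).choose_spec.1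

theorem edgeCount_of (a : FreeGroup α →* Equiv.Perm X) (s : α) (x : X) :
    edgeCount a (.of s) x = Pi.single (s, x) 1 :=
  (exists_isActionCocycle_of_freeGroup a _).choose_spec.2 s x

theorem sum_abs_edgeCount_le_norm [Fintype α] [Fintype X] (a : FreeGroup α →* Equiv.Perm X)
    (w : FreeGroup α) (x : X) : ∑ p, |edgeCount a w x p| ≤ w.norm := by
  refine (isActionCocycle_edgeCount a).sum_abs_le_norm (fun s x => ?_) w x
  rw [edgeCount_of, sum_abs_single, abs_one]

theorem IsActionCocycle.exists_linearMap_edgeCount [Finite α] [Finite X]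
    {d : FreeGroup α → X → M} (hd : IsActionCocycle a d) :
    ∃ ρ : (α × X → ℤ) →ₗ[ℤ] M, ∀ w x, ρ (edgeCount a w x) = d w x := by
  let ρ := (Pi.basisFun ℤ (α × X)).constr ℤ fun p => d (.of p.1) p.2
  have hρ : ∀ s x, ρ (edgeCount a (.of s) x) = d (.of s) x := fun s x => by
    rw [edgeCount_of, ← Pi.basisFun_apply, Module.Basis.constr_basis]
  have heq := ((isActionCocycle_edgeCount a).map ρ.toAddMonoidHom).ext_of_freeGroup hd hρ
  exact ⟨ρ, fun w x => congrFun₂ heq w x⟩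

end FreeGroup

section Coset

variable {G : Type*} [Group G] (H : Subgroup G)

theorem out_inv_mul_mul_out_mem (g : G) (x : G ⧸ H) : (g • x).out⁻¹ * (g * x.out) ∈ H := by
  rw [← QuotientGroup.eq, QuotientGroup.out_eq', ← smul_eq_mul, MulAction.Quotient.coe_smul_out]

/-- The cocycle on the coset action of `G` with values in the abelianisation of `H` that closes the
path from `x` to `g • x` to an element of `H`, by means of the coset representatives
`Quotient.out`. -/
noncomputable def cosetCocycle (g : G) (x : G ⧸ H) : Additive (Abelianization H) :=
  .ofMul (.of ⟨_, out_inv_mul_mul_out_mem H g x⟩)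

theorem isActionCocycle_cosetCocycle :
    IsActionCocycle (MulAction.toPermHom G (G ⧸ H)) (cosetCocycle H) := fun g g' x => by
  rw [cosetCocycle, cosetCocycle, cosetCocycle, ← ofMul_mul, ← map_mul]
  simp [mul_smul, mul_assoc]

theorem smul_one_coset_eq_of_mem {h : G} (hh : h ∈ H) :
    h • ((1 : G) : G ⧸ H) = ((1 : G) : G ⧸ H) := by
  rw [MulAction.Quotient.smul_coe, smul_eq_mul, mul_one, eq_comm, QuotientGroup.eq]
  simpa using hh

theorem cosetCocycle_one_coset (h : H) :
    cosetCocycle H h ((1 : G) : G ⧸ H) = .ofMul (.of h) := by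
  let t : H := ⟨((1 : G) : G ⧸ H).out, by
    have := QuotientGroup.out_eq' ((1 : G) : G ⧸ H)
    rw [eq_comm, QuotientGroup.eq] at this
    simpa using this⟩
  have hconj : (⟨_, out_inv_mul_mul_out_mem H h ((1 : G) : G ⧸ H)⟩ : H) = t⁻¹ * (h * t) := by
    ext
    simp [t, smul_one_coset_eq_of_mem H h.2]
  rw [cosetCocycle, hconj]
  refine congrArg Additive.ofMul ?_
  rw [map_mul, map_mul, map_inv, mul_comm, mul_assoc, mul_inv_cancel, mul_one]

end Coset

section Presentation

variable {α G : Type*} [DecidableEq α] [Group G]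

/-- The edge counts, in the Schreier graph of `G ⧸ H`, of all lifts of the relators in `R`. -/
def relatorCycles (φ : FreeGroup α →* G) (R : Set (FreeGroup α)) (H : Subgroup G)
    [DecidableEq (G ⧸ H)] : Set (α × G ⧸ H → ℤ) :=
  {v | ∃ r ∈ R, ∃ x, edgeCount ((MulAction.toPermHom G (G ⧸ H)).comp φ) r x = v}

theorem exists_abelianization_injective [Finite α] {φ : FreeGroup α →* G}
    (hφ : Function.Surjective φ) {R : Set (FreeGroup α)}
    (hker : φ.ker = Subgroup.normalClosure R) (H : Subgroup G)
    [DecidableEq (G ⧸ H)] [Finite (G ⧸ H)] :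
    ∃ f : Additive (Abelianization H) →+ (α × G ⧸ H → ℤ) ⧸ Submodule.span ℤ (relatorCycles φ R H),
      Function.Injective f := by
  let b := MulAction.toPermHom G (G ⧸ H)
  let x₀ : G ⧸ H := (1 : G)
  let S := Submodule.span ℤ (relatorCycles φ R H)
  have hRφ : R ⊆ φ.ker := hker ▸ Subgroup.subset_normalClosure
  have hm := (isActionCocycle_edgeCount (b.comp φ)).map S.mkQ.toAddMonoidHom
  obtain ⟨c, hc, hcφ⟩ := hm.exists_descend hφ fun w hw => by
    refine hm.eq_zero_of_mem_normalClosure (fun r hr => ?_) (fun r hr x => ?_) (hker ▸ hw)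
    · rw [SetLike.mem_coe, MonoidHom.mem_ker, MonoidHom.comp_apply, MonoidHom.mem_ker.1 (hRφ hr),
        map_one]
    · exact (Submodule.Quotient.mk_eq_zero _).2 (Submodule.subset_span ⟨r, hr, x, rfl⟩)
  have hd := isActionCocycle_cosetCocycle H
  obtain ⟨ρ, hρ⟩ := (hd.comp φ).exists_linearMap_edgeCount
  have hSρ : S ≤ ρ.ker := Submodule.span_le.2 <| by
    rintro _ ⟨r, hr, x, rfl⟩
    rw [SetLike.mem_coe, LinearMap.mem_ker, hρ, MonoidHom.mem_ker.1 (hRφ hr), hd.apply_one]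
  have hρc : ∀ g x, S.liftQ ρ hSρ (c g x) = cosetCocycle H g x := fun g x => by
    obtain ⟨w, rfl⟩ := hφ g
    rw [hcφ]
    exact hρ w x
  let f : Additive (Abelianization H) →+ (α × G ⧸ H → ℤ) ⧸ S :=
    (Abelianization.lift (hc.loopHom H x₀ fun _ => smul_one_coset_eq_of_mem H)).toAdditiveLeft
  have hf : Function.LeftInverse (S.liftQ ρ hSρ) f := fun y => by
    obtain ⟨h, rfl⟩ := QuotientGroup.mk_surjective y.toMul
    calc S.liftQ ρ hSρ (f (.ofMul (.of h))) = S.liftQ ρ hSρ (c h x₀) := rfl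
      _ = cosetCocycle H h x₀ := hρc h x₀
      _ = .ofMul (.of h) := cosetCocycle_one_coset H h
  exact ⟨f, hf.injective⟩

theorem finite_torsion_abelianization_and_card_le_pow [Fintype α] {φ : FreeGroup α →* G}
    (hφ : Function.Surjective φ) {R : Set (FreeGroup α)}
    (hker : φ.ker = Subgroup.normalClosure R) {L : ℕ} (hL : 1 ≤ L) (hR : ∀ r ∈ R, r.norm ≤ L)
    (H : Subgroup G) [H.FiniteIndex] :
    Finite (CommGroup.torsion (Abelianization H)) ∧
      Nat.card (CommGroup.torsion (Abelianization H)) ≤ L ^ (Fintype.card α * H.index) := by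
  classical
  have := Fintype.ofFinite (G ⧸ H)
  obtain ⟨f, hf⟩ := exists_abelianization_injective hφ hker H
  let Q := (α × G ⧸ H → ℤ) ⧸ Submodule.span ℤ (relatorCycles φ R H)
  have : Finite (AddCommGroup.torsion Q) := finite_torsion_of_module_finite Q
  let g : CommGroup.torsion (Abelianization H) → AddCommGroup.torsion Q := fun y =>
    ⟨f (.ofMul y), AddCommGroup.le_comap_torsion f (isOfFinAddOrder_ofMul_iff.2 y.2)⟩
  have hg : Function.Injective g := fun y z hyz =>
    Subtype.ext (hf (congrArg Subtype.val hyz))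
  refine ⟨Finite.of_injective g hg, (Nat.card_le_card_of_injective g hg).trans ?_⟩
  rw [Subgroup.index, Nat.card_eq_fintype_card (α := G ⧸ H), ← Fintype.card_prod]
  refine card_torsion_quotient_span_le_pow _ L hL ?_
  rintro _ ⟨r, hr, x, rfl⟩
  exact (sum_abs_edgeCount_le_norm _ r x).trans (by exact_mod_cast hR r hr)

end Presentation

theorem card_torsion_of_finite (A : Type*) [CommGroup A] [Finite A] :
    Nat.card (CommGroup.torsion A) = Nat.card A := by
  rw [CommGroup.torsion_eq_top_iff.2 isMulTorsion_of_finite, Subgroup.card_top]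

theorem stmt13_general (G : Type*) [Group G] (hG : IsFinitelyPresented G) :
    ∃ k : ℝ, 1 < k ∧ ∀ H : Subgroup G, H.FiniteIndex →
      Finite (CommGroup.torsion (Abelianization H)) ∧
        (Nat.card (CommGroup.torsion (Abelianization H)) : ℝ) ≤ k ^ H.index := by
  obtain ⟨n, φ, R, hφ, hker⟩ := hG
  let L := R.sup FreeGroup.norm + 2
  have hL : 1 < L := by omega
  have hR : ∀ r ∈ (R : Set (FreeGroup (Fin n))), r.norm ≤ L := fun r hr =>
    (Finset.le_sup (f := FreeGroup.norm) hr).trans (Nat.le_add_right _ 2)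
  -- The exponent is `n + 1` rather than `n` to keep the constant above `1` when `n = 0`.
  refine ⟨(L : ℝ) ^ (n + 1), ?_, fun H _ => ?_⟩
  · exact one_lt_pow₀ (by exact_mod_cast hL) n.succ_ne_zero
  · obtain ⟨hfin, hcard⟩ :=
      finite_torsion_abelianization_and_card_le_pow hφ hker hL.le hR H
    refine ⟨hfin, ?_⟩
    have hpow : L ^ (Fintype.card (Fin n) * H.index) ≤ (L ^ (n + 1)) ^ H.index := by
      rw [Fintype.card_fin, ← pow_mul]
      gcongr
      exacts [hL.le, n.le_succ]
    exact_mod_cast hcard.trans hpow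

/-- **Proposition 6.1.** Let `G` be a finitely presented group.  Then there is a
constant `k > 1` such that for every finite index subgroup `H` of `G`, either the
abelianisation `H/[H,H]` is infinite, or `|H/[H,H]| ≤ k^[G:H]`. -/
theorem stmt13 (G : Type*) [Group G] (hG : IsFinitelyPresented G) :
    ∃ k : ℝ, 1 < k ∧ ∀ H : Subgroup G, H.FiniteIndex →
      (Infinite (Abelianization ↥H) ∨
        (Nat.card (Abelianization ↥H) : ℝ) ≤ k ^ H.index) := by
  obtain ⟨k, hk, hbound⟩ := stmt13_general G hG
  refine ⟨k, hk, fun H hH => (finite_or_infinite _).symm.imp_right fun _ : Finite _ => ?_⟩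
  exact card_torsion_of_finite (Abelianization H) ▸ (hbound H hH).2
end

section
/- Let G be a group with a finite presentation having g generators and r relations, and let H be a finite index subgroup of G. Then the abelianisation H/[H,H] contains a free abelian direct summand of rank (g − 1 − r)[G : H] + 1; in particular, if g − r ≥ 2 then every finite index subgroup of G has infinite abelianisation. -/
/-!
A presentation of `G` bounds the `1`-cocycles of `G` with values in a finite-dimensional
representation `V` from below: crossed homomorphisms out of the free group are arbitrary on the `g`
generators, and each of the `r` relators imposes `dim V` linear conditions, so
`dim Z¹(G, V) ≥ (g - r) dim V`. Dividing by the coboundaries `V / V^G` gives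
`dim H¹(G, V) ≥ (g - 1 - r) dim V + dim H⁰(G, V)`.

For `V` coinduced from the trivial representation `k` of `H`, in characteristic zero, `dim V` is
`[G : H]`, and by Shapiro's lemma `H⁰(G, V) = k` while `H¹(G, V) = Hom(H, k)`, whose dimension is
the rank of the abelianisation of `H`.
-/

open Module groupCohomology

/-- The `k`-module of crossed homomorphisms (derivations) from `G` to a representation `ρ`. These
are the `1`-cocycles of group cohomology, but with no restriction on the universes of `k`, `G` and
`V`, so that a group can be compared with a free group mapping onto it. -/
def crossedHom {k G V : Type*} [Semiring k] [Group G] [AddCommGroup V] [Module k V]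
    (ρ : Representation k G V) : Submodule k (G → V) where
  carrier := {f | ∀ g h, f (g * h) = ρ g (f h) + f g}
  add_mem' {f₁ f₂} h₁ h₂ g h := by
    simp only [Pi.add_apply, h₁ g h, h₂ g h, map_add]
    abel
  zero_mem' g h := by simp
  smul_mem' c f hf g h := by simp only [Pi.smul_apply, hf g h, map_smul, smul_add]

namespace crossedHom

section Ring

variable {k F G V : Type*} [Ring k] [Group F] [Group G] [AddCommGroup V] [Module k V]
  {ρ : Representation k G V}

theorem apply_mul (f : crossedHom ρ) (g h : G) : f.1 (g * h) = ρ g (f.1 h) + f.1 g :=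
  f.2 g h

theorem apply_one (f : crossedHom ρ) : f.1 1 = 0 := by
  simpa using apply_mul f 1 1

/-- The zero set of a crossed homomorphism. It is a subgroup, so a crossed homomorphism is
determined by its values on generators. -/
def zeroLocus (f : crossedHom ρ) : Subgroup G where
  carrier := {g | f.1 g = 0}
  one_mem' := apply_one f
  mul_mem' {g h} hg hh := by
    change f.1 (g * h) = 0
    rw [apply_mul, hg, hh, map_zero, add_zero]
  inv_mem' {g} hg := by
    have h := apply_mul f g⁻¹ g
    rw [inv_mul_cancel, apply_one, hg, map_zero, zero_add] at h
    exact h.symm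

theorem normalClosure_le_zeroLocus (f : crossedHom ρ) {R : Set G} (hρ : R ⊆ ρ.ker)
    (hf : R ⊆ zeroLocus f) : Subgroup.normalClosure R ≤ zeroLocus f := by
  refine (Subgroup.closure_le _).2 fun x hx => ?_
  obtain ⟨r, hr, hconj⟩ := Group.mem_conjugatesOfSet_iff.1 hx
  obtain ⟨g, rfl⟩ := isConj_iff.1 hconj
  have hρr : ρ r = 1 := hρ hr
  have hfr : f.1 r = 0 := hf hr
  calc f.1 (g * r * g⁻¹) = ρ g (f.1 g⁻¹) + f.1 g := by
        rw [mul_assoc, apply_mul, apply_mul, hρr, hfr, Module.End.one_apply, add_zero]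
    _ = 0 := by rw [← apply_mul, mul_inv_cancel, apply_one]

/-- Evaluation of crossed homomorphisms at a family of group elements, used for generators and for
relators. -/
def eval (ρ : Representation k G V) {ι : Type*} (s : ι → G) : crossedHom ρ →ₗ[k] (ι → V) :=
  LinearMap.funLeft k V s ∘ₗ (crossedHom ρ).subtype

theorem eval_injective (ρ : Representation k G V) {ι : Type*} {s : ι → G}
    (hs : Subgroup.closure (Set.range s) = ⊤) : Function.Injective (eval ρ s) := by
  intro f₁ f₂ h
  have hle : Subgroup.closure (Set.range s) ≤ zeroLocus (f₁ - f₂) :=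
    (Subgroup.closure_le _).2 <| Set.range_subset_iff.2 fun i => sub_eq_zero.2 (congrFun h i)
  exact Subtype.ext <| funext fun g => sub_eq_zero.1 (hle (hs ▸ Subgroup.mem_top g))

theorem finite [Group.FG G] [IsNoetherianRing k] [Module.Finite k V] (ρ : Representation k G V) :
    Module.Finite k (crossedHom ρ) := by
  obtain ⟨S, hS⟩ := (Group.fg_def (G := G)).1 inferInstance
  exact .of_injective (eval ρ ((↑) : S → G)) (eval_injective ρ (by simpa using hS))

/-- Restriction of crossed homomorphisms along a group homomorphism. -/
def comap (ρ : Representation k G V) (π : F →* G) : crossedHom ρ →ₗ[k] crossedHom (ρ.comp π) :=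
  (LinearMap.funLeft k V π).restrict fun f hf x y => by
    simpa using hf (π x) (π y)

theorem comap_injective (ρ : Representation k G V) {π : F →* G} (hπ : Function.Surjective π) :
    Function.Injective (comap ρ π) := fun _ _ h =>
  Subtype.ext <| LinearMap.funLeft_injective_of_surjective k V π hπ <| congrArg Subtype.val h

theorem mem_range_comap_of_ker_le_zeroLocus {π : F →* G} (hπ : Function.Surjective π)
    {f : crossedHom (ρ.comp π)} (hf : π.ker ≤ zeroLocus f) :
    f ∈ LinearMap.range (comap ρ π) := by
  have hfactor : ∀ {x y}, π x = π y → f.1 x = f.1 y := fun {x y} hxy => by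
    have hz : f.1 (x⁻¹ * y) = 0 := hf (show π (x⁻¹ * y) = 1 by simp [hxy])
    have hmul := apply_mul f x (x⁻¹ * y)
    rw [mul_inv_cancel_left, hz, map_zero, zero_add] at hmul
    exact hmul.symm
  obtain ⟨s, hs⟩ := hπ.hasRightInverse
  have hsf : f.1 ∘ s ∈ crossedHom ρ := fun g h => by
    have hgh : π (s (g * h)) = π (s g * s h) := by simp only [map_mul, hs _]
    simp only [Function.comp_apply]
    rw [hfactor hgh, apply_mul, MonoidHom.comp_apply, hs]
  exact ⟨⟨f.1 ∘ s, hsf⟩, Subtype.ext <| funext fun x => hfactor (hs (π x))⟩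

theorem range_comap_eq_ker_eval (ρ : Representation k G V) {π : F →* G}
    (hπ : Function.Surjective π) {R : Set F} (hker : π.ker = Subgroup.normalClosure R) :
    LinearMap.range (comap ρ π) = LinearMap.ker (eval (ρ.comp π) ((↑) : R → F)) := by
  have hR : ∀ r ∈ R, π r = 1 := fun r hr =>
    hker.ge (Subgroup.subset_normalClosure hr)
  refine le_antisymm ?_ fun f hf => mem_range_comap_of_ker_le_zeroLocus hπ <|
    hker.trans_le <| normalClosure_le_zeroLocus f (fun r hr => ?_) fun r hr =>
      show f.1 r = 0 from congrFun (LinearMap.mem_ker.1 hf) ⟨r, hr⟩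
  · rintro _ ⟨f, rfl⟩
    exact funext fun r => (congrArg f.1 (hR r r.2)).trans (apply_one f)
  · rw [SetLike.mem_coe, MonoidHom.mem_ker, MonoidHom.comp_apply, hR r hr, map_one]

theorem mem_of_affineAction (Φ : G →* (V ≃ᵃ[k] V))
    (hΦ : ∀ g, ((Φ g).linear : V →ₗ[k] V) = ρ g) : (fun g => Φ g 0) ∈ crossedHom ρ := fun g h =>
  calc Φ (g * h) 0 = Φ g (Φ h 0 +ᵥ (0 : V)) := by
        rw [map_mul, vadd_eq_add, add_zero]; rfl
    _ = (Φ g).linear (Φ h 0) + Φ g 0 := (Φ g).map_vadd 0 (Φ h 0)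
    _ = ρ g (Φ h 0) + Φ g 0 := by rw [← hΦ g]; rfl

end Ring

-- A crossed homomorphism is the translation part of an affine action with linear part `ρ`, and an
-- affine action of a free group can be prescribed freely on the generators.
theorem eval_freeGroup_of_surjective {k V α : Type*} [CommRing k] [AddCommGroup V] [Module k V]
    (ρ : Representation k (FreeGroup α) V) :
    Function.Surjective (eval ρ FreeGroup.of) := fun u => by
  let L : FreeGroup α →* (V ≃ₗ[k] V) :=
    (LinearMap.GeneralLinearGroup.generalLinearEquiv k V).toMonoidHom.comp ρ.asGroupHom
  let Φ : FreeGroup α →* (V ≃ᵃ[k] V) := FreeGroup.lift fun a =>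
    AffineEquiv.constVAdd k V (u a) * (L (FreeGroup.of a)).toAffineEquiv
  have hlinear : AffineEquiv.linearHom.comp Φ = L := by
    ext1 a
    simp only [MonoidHom.comp_apply, Φ, FreeGroup.lift_apply_of, map_mul]
    rfl
  refine ⟨⟨fun x => Φ x 0, mem_of_affineAction Φ fun x => ?_⟩, funext fun a => ?_⟩
  · exact congrArg LinearEquiv.toLinearMap (DFunLike.congr_fun hlinear x)
  · simp [eval, Φ]

theorem finrank_freeGroup {k V α : Type*} [CommRing k] [Nontrivial k] [AddCommGroup V]
    [Module k V] [Module.Free k V] [Module.Finite k V] [Fintype α]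
    (ρ : Representation k (FreeGroup α) V) :
    finrank k (crossedHom ρ) = Fintype.card α * finrank k V := by
  have hbij : Function.Bijective (eval ρ FreeGroup.of) :=
    ⟨eval_injective ρ (FreeGroup.closure_range_of α), eval_freeGroup_of_surjective ρ⟩
  simp [(LinearEquiv.ofBijective _ hbij).finrank_eq, finrank_pi_fintype]

theorem card_mul_finrank_le {k G V α : Type*} [Field k] [Group G] [AddCommGroup V] [Module k V]
    [FiniteDimensional k V] [Fintype α] {π : FreeGroup α →* G}
    (hπ : Function.Surjective π) {Rel : Finset (FreeGroup α)}
    (hker : π.ker = Subgroup.normalClosure (Rel : Set (FreeGroup α)))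
    (ρ : Representation k G V) :
    Fintype.card α * finrank k V ≤ Rel.card * finrank k V + finrank k (crossedHom ρ) := by
  have := finite (ρ.comp π)
  let relators := eval (ρ.comp π) (Subtype.val : ↥(Rel : Set (FreeGroup α)) → FreeGroup α)
  have hker_eq : finrank k (LinearMap.ker relators) = finrank k (crossedHom ρ) := by
    rw [← range_comap_eq_ker_eval ρ hπ hker, LinearMap.finrank_range_of_inj (comap_injective ρ hπ)]
  have hrange_le : finrank k (LinearMap.range relators) ≤ Rel.card * finrank k V :=
    (Submodule.finrank_le _).trans_eq (by simp [finrank_pi_fintype])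
  calc Fintype.card α * finrank k V
      = finrank k (LinearMap.range relators) + finrank k (LinearMap.ker relators) := by
        rw [LinearMap.finrank_range_add_finrank_ker, finrank_freeGroup]
    _ ≤ Rel.card * finrank k V + finrank k (crossedHom ρ) := add_le_add hrange_le hker_eq.le

end crossedHom

section Coinduced

variable {k G V : Type*} [Group G] {H : Subgroup G}

/-- A function coinduced from `H` is freely determined by its values on a right transversal
of `H`. -/
noncomputable def coindVEquivOfIsComplement [Semiring k] [AddCommMonoid V] [Module k V] {T : Set G}
    (hT : Subgroup.IsComplement H T) (σ : Representation k H V) :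
    Representation.coindV H.subtype σ ≃ₗ[k] (T → V) where
  toFun f t := f.1 t
  map_add' _ _ := rfl
  map_smul' _ _ := rfl
  invFun v := ⟨fun g => σ (hT.equiv g).1 (v (hT.equiv g).2), fun h g => by
    simp [hT.equiv_mul_left h g]⟩
  left_inv f := Subtype.ext <| funext fun g =>
    (f.2 (hT.equiv g).1 (hT.equiv g).2).symm.trans (congrArg f.1 (hT.equiv_fst_mul_equiv_snd g))
  right_inv v := funext fun t => by
    simp only [hT.equiv_fst_eq_one_of_mem_of_one_mem H.one_mem t.2,
      hT.equiv_snd_eq_self_of_mem_of_one_mem H.one_mem t.2]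
    exact congrArg (fun L : V →ₗ[k] V => L (v t)) (map_one σ)

theorem finite_coindV [Semiring k] [AddCommMonoid V] [Module k V] [H.FiniteIndex]
    [Module.Finite k V] (σ : Representation k H V) :
    Module.Finite k (Representation.coindV H.subtype σ) := by
  obtain ⟨T, hT, -⟩ := H.exists_isComplement_right 1
  have : Finite T := Nat.finite_of_card_ne_zero (hT.card_right ▸ Subgroup.FiniteIndex.index_ne_zero)
  exact .equiv (coindVEquivOfIsComplement hT σ).symm

theorem finrank_coindV [Semiring k] [StrongRankCondition k] [AddCommMonoid V] [Module k V]
    [Module.Free k V] [Module.Finite k V] [H.FiniteIndex] (σ : Representation k H V) :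
    finrank k (Representation.coindV H.subtype σ) = H.index * finrank k V := by
  obtain ⟨T, hT, -⟩ := H.exists_isComplement_right 1
  have : Finite T := Nat.finite_of_card_ne_zero (hT.card_right ▸ Subgroup.FiniteIndex.index_ne_zero)
  have := Fintype.ofFinite T
  simp [(coindVEquivOfIsComplement hT σ).finrank_eq, finrank_pi_fintype, ← hT.card_right]

end Coinduced

section Cohomology

universe u

variable {k G : Type u} [Field k] [Group G]

theorem crossedHom_eq_cocycles₁ (A : Rep.{u} k G) : crossedHom A.ρ = cocycles₁ A :=
  Submodule.ext fun f => (mem_cocycles₁_iff f).symm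

theorem finrank_H1_add_finrank_coboundaries₁ (A : Rep.{u} k G) [FiniteDimensional k (cocycles₁ A)] :
    finrank k (H1 A) + finrank k (coboundaries₁ A) = finrank k (cocycles₁ A) := by
  have hker : LinearMap.ker (H1π A).hom = (coboundaries₁ A).comap (cocycles₁ A).subtype :=
    Submodule.ext H1π_eq_zero_iff
  have hrange : LinearMap.range (H1π A).hom = ⊤ :=
    LinearMap.range_eq_top.2 <| (ModuleCat.epi_iff_surjective _).1 inferInstance
  rw [← LinearMap.finrank_range_add_finrank_ker (H1π A).hom, hrange, finrank_top, hker,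
    (Submodule.comapSubtypeEquivOfLe (coboundaries₁_le_cocycles₁ A)).finrank_eq]

theorem finrank_coboundaries₁_add_finrank_H0 (A : Rep.{u} k G) [FiniteDimensional k A] :
    finrank k (coboundaries₁ A) + finrank k (H0 A) = finrank k A := by
  have : FiniteDimensional k (ModuleCat.of k A.V) := ‹FiniteDimensional k A›
  rw [(H0Iso A).toLinearEquiv.finrank_eq]
  refine Eq.trans ?_ (LinearMap.finrank_range_add_finrank_ker (d₀₁ A).hom)
  rw [d₀₁_ker_eq_invariants]
  rfl

variable {α : Type*} [Fintype α] {π : FreeGroup α →* G} {Rel : Finset (FreeGroup α)}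

theorem card_mul_finrank_add_finrank_H0_le (hπ : Function.Surjective π)
    (hker : π.ker = Subgroup.normalClosure (Rel : Set (FreeGroup α)))
    (A : Rep.{u} k G) [FiniteDimensional k A] :
    Fintype.card α * finrank k A + finrank k (H0 A) ≤
      Rel.card * finrank k A + finrank k A + finrank k (H1 A) := by
  have : Group.FG G := Group.fg_of_surjective hπ
  have : FiniteDimensional k (cocycles₁ A) :=
    crossedHom_eq_cocycles₁ A ▸ crossedHom.finite A.ρ
  have hZ := crossedHom.card_mul_finrank_le hπ hker A.ρ
  rw [crossedHom_eq_cocycles₁, ← finrank_H1_add_finrank_coboundaries₁] at hZ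
  have hB := finrank_coboundaries₁_add_finrank_H0 A
  omega

theorem card_mul_index_mul_finrank_add_finrank_H0_le (hπ : Function.Surjective π)
    (hker : π.ker = Subgroup.normalClosure (Rel : Set (FreeGroup α)))
    (H : Subgroup G) [H.FiniteIndex] (A : Rep.{u} k H) [FiniteDimensional k A] :
    Fintype.card α * (H.index * finrank k A) + finrank k (H0 A) ≤
      Rel.card * (H.index * finrank k A) + H.index * finrank k A + finrank k (H1 A) := by
  have : FiniteDimensional k (Rep.coind H.subtype A) := finite_coindV A.ρ
  have hdim : finrank k (Rep.coind H.subtype A) = H.index * finrank k A := finrank_coindV A.ρ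
  have hEuler := card_mul_finrank_add_finrank_H0_le hπ hker (Rep.coind H.subtype A)
  rwa [hdim, (coindIso A 0).toLinearEquiv.finrank_eq, (coindIso A 1).toLinearEquiv.finrank_eq]
    at hEuler

end Cohomology

section Rank

theorem finrank_intLinearMap (k A : Type*) [Field k] [CharZero k] [AddCommGroup A] :
    finrank k (A →ₗ[ℤ] k) = finrank ℤ A := by
  rw [(LinearMap.liftBaseChangeEquiv k).finrank_eq]
  exact Subspace.dual_finrank_eq.trans (TensorProduct.isBaseChange ℤ A k).finrank_eq

/-- The universal property of the abelianisation, for homomorphisms to a `k`-module. -/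
def abelianizationHomEquiv (k G M : Type*) [Semiring k] [Group G] [AddCommGroup M] [Module k M] :
    (Additive (Abelianization G) →+ M) ≃ₗ[k] (Additive G →+ M) where
  __ := MonoidHom.toAdditiveLeft.symm.trans <|
    Abelianization.lift.symm.trans MonoidHom.toAdditiveLeft
  map_add' _ _ := rfl
  map_smul' _ _ := rfl

universe u

theorem finrank_H1_trivial (k G : Type u) [Field k] [CharZero k] [Group G] :
    finrank k (H1 (Rep.trivial k G k)) = finrank ℤ (Additive (Abelianization G)) := by
  rw [(H1IsoOfIsTrivial (Rep.trivial k G k)).toLinearEquiv.finrank_eq]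
  calc finrank k (Additive G →+ k) = finrank k (Additive (Abelianization G) →+ k) :=
        (abelianizationHomEquiv k G k).finrank_eq.symm
    _ = finrank k (Additive (Abelianization G) →ₗ[ℤ] k) := (addMonoidHomLequivInt k).finrank_eq
    _ = finrank ℤ (Additive (Abelianization G)) := finrank_intLinearMap k _

theorem card_mul_index_add_one_le_add_finrank_abelianization {G : Type u} [Group G]
    {α : Type*} [Fintype α] {π : FreeGroup α →* G} (hπ : Function.Surjective π)
    {Rel : Finset (FreeGroup α)}
    (hker : π.ker = Subgroup.normalClosure (Rel : Set (FreeGroup α)))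
    (H : Subgroup G) [H.FiniteIndex] :
    Fintype.card α * H.index + 1 ≤
      Rel.card * H.index + H.index + finrank ℤ (Additive (Abelianization H)) := by
  -- `groupCohomology` needs the coefficient field in the universe of `G`.
  let k := ULift.{u} ℚ
  have : CharZero k := CharP.charP_to_charZero k
  have hH0 : finrank k (H0 (Rep.trivial k H k)) = 1 :=
    (H0IsoOfIsTrivial (Rep.trivial k H k)).toLinearEquiv.finrank_eq.trans (finrank_self k)
  have hk : finrank k (Rep.trivial k H k) = 1 := finrank_self k
  have : FiniteDimensional k (Rep.trivial k H k) := inferInstanceAs (FiniteDimensional k k)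
  simpa only [hk, hH0, finrank_H1_trivial, mul_one] using
    card_mul_index_mul_finrank_add_finrank_H0_le hπ hker H (Rep.trivial k H k)

end Rank

section Summand

theorem exists_surjective_pi_of_le_finrank {R A : Type*} [CommRing R] [IsDomain R]
    [IsPrincipalIdealRing R] [AddCommGroup A] [Module R A] [Module.Finite R A] {c : ℕ}
    (hc : c ≤ finrank R A) : ∃ p : A →ₗ[R] (Fin c → R), Function.Surjective p := by
  let T := Submodule.torsion R A
  have hrank : finrank R (A ⧸ T) = finrank R A := finrank_quotient_eq_of_le_torsion le_rfl
  let b := Module.finBasis R (A ⧸ T)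
  let j : Fin c → Fin (finrank R (A ⧸ T)) := Fin.castLE (hrank ▸ hc)
  exact ⟨LinearMap.funLeft R R j ∘ₗ b.equivFun.toLinearMap ∘ₗ T.mkQ,
    (LinearMap.funLeft_surjective_of_injective R R j (Fin.castLE_injective _)).comp
      (b.equivFun.surjective.comp T.mkQ_surjective)⟩

theorem isCompl_range_ker_of_leftInverse {A N : Type*} [Group A] [Group N] {p : A →* N}
    {s : N →* A} (h : Function.LeftInverse p s) : IsCompl s.range p.ker := by
  refine ⟨Subgroup.disjoint_def.2 ?_, codisjoint_iff_le_sup.2 fun a _ => ?_⟩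
  · rintro _ ⟨n, rfl⟩ hn
    rw [← h n, show p (s n) = 1 from hn, map_one]
  · rw [← mul_inv_cancel_left (s (p a)) a]
    exact Subgroup.mul_mem_sup ⟨p a, rfl⟩ (by simp [MonoidHom.mem_ker, h (p a)])

theorem exists_free_summand_of_le_finrank {A : Type*} [CommGroup A] [Group.FG A] {c : ℕ}
    (hc : c ≤ finrank ℤ (Additive A)) :
    ∃ M B : Subgroup A, M ⊓ B = ⊥ ∧ M ⊔ B = ⊤ ∧ Nonempty (M ≃* Multiplicative (Fin c → ℤ)) := by
  have : Module.Finite ℤ (Additive A) := Module.Finite.iff_addGroup_fg.2 inferInstance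
  obtain ⟨p, hp⟩ := exists_surjective_pi_of_le_finrank hc
  obtain ⟨s, hs⟩ := p.exists_rightInverse_of_surjective (LinearMap.range_eq_top.2 hp)
  let p' : A →* Multiplicative (Fin c → ℤ) := AddMonoidHom.toMultiplicativeRight p.toAddMonoidHom
  let s' : Multiplicative (Fin c → ℤ) →* A := AddMonoidHom.toMultiplicativeLeft s.toAddMonoidHom
  have h : Function.LeftInverse p' s' := LinearMap.congr_fun hs
  have hcompl := isCompl_range_ker_of_leftInverse h
  exact ⟨s'.range, p'.ker, hcompl.inf_eq_bot, hcompl.sup_eq_top,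
    ⟨(MonoidHom.ofLeftInverse h).symm⟩⟩

theorem infinite_of_finrank_pos {R A : Type*} [Ring R] [Infinite R] [AddCommGroup A] [Module R A]
    (h : 0 < finrank R A) : Infinite A := by
  obtain ⟨v, hv⟩ := exists_linearIndependent_of_le_finrank (show 1 ≤ finrank R A from h)
  exact Infinite.of_injective _ hv

end Summand

/-- Let `G` be a group with a finite presentation with `g` generators and `r` relations
(here `π` is the quotient map from the free group on the finite type `α` of generators,
with `g = |α|`, whose kernel is the normal closure of the finite set `Rel` of `r`
relations), and let `H` be a finite index subgroup of `G`.  Then the abelianisation of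
`H` contains a free abelian direct summand of rank `(g - 1 - r)[G : H] + 1` (the claim
being vacuous when this quantity is not a nonnegative integer `c`); in particular, if
`g - r ≥ 2` then `H` has infinite abelianisation. -/
theorem stmt16 (G : Type*) [Group G]
    (α : Type) [Fintype α]
    (π : FreeGroup α →* G) (hsurj : Function.Surjective π)
    (Rel : Finset (FreeGroup α))
    (hker : π.ker = Subgroup.normalClosure (Rel : Set (FreeGroup α)))
    (H : Subgroup G) (hH : H.FiniteIndex) :
    (∀ c : ℕ, (c : ℤ) = ((Fintype.card α : ℤ) - 1 - (Rel.card : ℤ)) * (H.index : ℤ) + 1 →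
      ∃ M B : Subgroup (Abelianization ↥H),
        M ⊓ B = ⊥ ∧ M ⊔ B = ⊤ ∧
        Nonempty (M ≃* Multiplicative (Fin c → ℤ))) ∧
    (Rel.card + 2 ≤ Fintype.card α → Infinite (Abelianization ↥H)) := by
  have hbound := card_mul_index_add_one_le_add_finrank_abelianization hsurj hker H
  refine ⟨fun c hc => ?_, fun hgr => ?_⟩
  · have : Group.FG G := Group.fg_of_surjective hsurj
    have : Group.FG (Abelianization H) := QuotientGroup.fg _
    refine exists_free_summand_of_le_finrank ?_
    zify at hbound ⊢
    linarith
  · have hmul := Nat.mul_le_mul_right H.index hgr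
    exact infinite_of_finrank_pos (R := ℤ) (A := Additive (Abelianization H)) (by linarith)
end
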